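/- arXiv:math/0703883 — 2 statements merged into one kernel-verified Lean document; each statement's English description precedes it below -/
import Mathlib

section
/- Let 0 < α < 1. There exists a constant C > 0 such that for every Schwartz vector field u : ℝ³ → ℝ³ with div u = 0 and vorticity ω = curl u, |∫_{ℝ³} ((ω·∇)u) · ω dx| ≤ (1/2) ‖∇ω‖_{L²}² + C ‖ω‖_{L²}² (‖ω‖_{Ḃ^{−1−α}_{∞,∞}}^{2/(1−α)} + ‖ω‖_{Ḃ^{−α}_{∞,∞}}^{2/(2−α)}), the inequality holding in [0,∞]. -/
open MeasureTheory Real Complex Filter Function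
open scoped ENNReal FourierTransform SchwartzMap

noncomputable section

/-- The properties of the radial smooth cutoff `χ` used to build the
Littlewood–Paley decomposition: smooth, compactly supported, radial,
`0 ≤ χ ≤ 1`, `χ = 1` on `{‖ξ‖ ≤ 3/4}` and `χ = 0` on `{‖ξ‖ > 4/3}`. -/
def IsLPCutoff {n : ℕ} (χ : EuclideanSpace ℝ (Fin n) → ℝ) : Prop :=
  ContDiff ℝ ((⊤ : ℕ∞) : WithTop ℕ∞) χ ∧ HasCompactSupport χ ∧
    (∀ ξ η, ‖ξ‖ = ‖η‖ → χ ξ = χ η) ∧ (∀ ξ, 0 ≤ χ ξ) ∧ (∀ ξ, χ ξ ≤ 1) ∧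
    (∀ ξ, ‖ξ‖ ≤ 3 / 4 → χ ξ = 1) ∧ (∀ ξ, 4 / 3 < ‖ξ‖ → χ ξ = 0)

/-- The low-frequency Littlewood–Paley projection `S_j f = 𝓕⁻¹(χ(·/2^j) 𝓕 f)`. -/
def Sproj {n : ℕ} (χ : EuclideanSpace ℝ (Fin n) → ℝ) (j : ℤ)
    (f : EuclideanSpace ℝ (Fin n) → ℂ) : EuclideanSpace ℝ (Fin n) → ℂ :=
  𝓕⁻ fun ξ => ((χ ((2 : ℝ) ^ (-j) • ξ) : ℝ) : ℂ) * 𝓕 f ξ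

/-- The Littlewood–Paley block `Δ_j f = 𝓕⁻¹(φ̂(·/2^j) 𝓕 f)`, where
`φ̂(ξ) = χ(ξ/2) - χ(ξ)`, i.e. `φ̂(ξ/2^j) = χ(ξ/2^(j+1)) - χ(ξ/2^j)`. -/
def Dproj {n : ℕ} (χ : EuclideanSpace ℝ (Fin n) → ℝ) (j : ℤ)
    (f : EuclideanSpace ℝ (Fin n) → ℂ) : EuclideanSpace ℝ (Fin n) → ℂ :=
  𝓕⁻ fun ξ => ((χ ((2 : ℝ) ^ (-(j + 1)) • ξ) - χ ((2 : ℝ) ^ (-j) • ξ) : ℝ) : ℂ) * 𝓕 f ξ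

/-- The `ℓ^q(ℤ)` norm of a sequence of extended nonnegative reals, with the usual
supremum modification for `q = ∞`. -/
def lqNorm (q : ℝ≥0∞) (a : ℤ → ℝ≥0∞) : ℝ≥0∞ :=
  if q = ∞ then ⨆ j, a j else (∑' j, a j ^ q.toReal) ^ (1 / q.toReal)

/-- The homogeneous Besov norm `‖f‖_{Ḃ^s_{p,q}}`, valued in `[0,∞]`. -/
def besovNorm {n : ℕ} (χ : EuclideanSpace ℝ (Fin n) → ℝ) (s : ℝ) (p q : ℝ≥0∞)
    (f : EuclideanSpace ℝ (Fin n) → ℂ) : ℝ≥0∞ :=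
  lqNorm q fun j => (2 : ℝ≥0∞) ^ ((j : ℝ) * s) * eLpNorm (Dproj χ j f) p volume
noncomputable section

/-- Abbreviation for the Euclidean space `ℝ³`. -/
abbrev E3 := EuclideanSpace ℝ (Fin 3)

/-- The partial derivative `∂ᵢ f` in the `i`-th coordinate direction. -/
def pd (i : Fin 3) (f : E3 → ℝ) : E3 → ℝ :=
  fun x => fderiv ℝ f x (EuclideanSpace.single i 1)

/-- The curl `∇ × u = (∂₂u³ - ∂₃u², ∂₃u¹ - ∂₁u³, ∂₁u² - ∂₂u¹)` of a vector field on `ℝ³`. -/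
def curl3 (u : Fin 3 → E3 → ℝ) : Fin 3 → E3 → ℝ :=
  ![fun x => pd 1 (u 2) x - pd 2 (u 1) x,
    fun x => pd 2 (u 0) x - pd 0 (u 2) x,
    fun x => pd 0 (u 1) x - pd 1 (u 0) x]

/-- The curl of a Schwartz vector field on `ℝ³`. -/
def curlS (u : Fin 3 → 𝓢(E3, ℝ)) : Fin 3 → E3 → ℝ :=
  curl3 fun i => ⇑(u i)

/-- The `L²` norm of a vector field (the `ℓ²` combination of the componentwise norms),
valued in `[0,∞]`. -/
def vecL2 (v : Fin 3 → E3 → ℝ) : ℝ≥0∞ :=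
  (∑ i : Fin 3, eLpNorm (v i) 2 volume ^ (2 : ℝ)) ^ (1 / 2 : ℝ)

/-- The `L²` norm `‖∇v‖_{L²}` of the gradient of a vector field,
`‖∇v‖_{L²}² = Σ_{i,j} ‖∂ᵢ vʲ‖_{L²}²`, valued in `[0,∞]`. -/
def gradL2 (v : Fin 3 → E3 → ℝ) : ℝ≥0∞ :=
  (∑ i : Fin 3, ∑ j : Fin 3, eLpNorm (pd i (v j)) 2 volume ^ (2 : ℝ)) ^ (1 / 2 : ℝ)

/-- The homogeneous Besov norm `‖v‖_{Ḃ^s_{∞,∞}} = sup_j 2^{js} ‖Δ_j v‖_{L^∞}` of a real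
vector field on `ℝ³`, taken as the maximum (supremum) over the components. -/
def vecBesovInf (χ : E3 → ℝ) (s : ℝ) (v : Fin 3 → E3 → ℝ) : ℝ≥0∞ :=
  ⨆ i : Fin 3, ⨆ j : ℤ,
    (2 : ℝ≥0∞) ^ ((j : ℝ) * s) * eLpNorm (Dproj χ j fun x => ((v i x : ℝ) : ℂ)) ⊤ volume

/-- The homogeneous Besov norm `Ḃ^s_{2,2}` of a 3×3-matrix field, as the `ℓ²`
combination of the componentwise Besov norms. -/
def matBesov22 (χ : E3 → ℝ) (s : ℝ) (m : Fin 3 → Fin 3 → E3 → ℝ) : ℝ≥0∞ :=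
  (∑ i : Fin 3, ∑ j : Fin 3,
      besovNorm χ s 2 2 (fun x => ((m i j x : ℝ) : ℂ)) ^ (2 : ℝ)) ^ (1 / 2 : ℝ)

/-- The `L²` norm of `Λ^α v`, where `Λ^α f = 𝓕⁻¹(|ξ|^α 𝓕 f)` acts componentwise on the
real vector field `v`, taken as the `ℓ²` combination of the componentwise norms. -/
def vecFracLapL2 (α : ℝ) (v : Fin 3 → E3 → ℝ) : ℝ≥0∞ :=
  (∑ i : Fin 3,
      eLpNorm (𝓕⁻ fun ξ => ((‖ξ‖ ^ α : ℝ) : ℂ) * 𝓕 (fun x => ((v i x : ℝ) : ℂ)) ξ) 2 volume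
        ^ (2 : ℝ)) ^ (1 / 2 : ℝ)

/-- The vortex-stretching integral `∫ ((ω·∇)u)·ω dx` of a Schwartz vector field `u`
with vorticity `ω = curl u`. -/
def vortexStretch (u : Fin 3 → 𝓢(E3, ℝ)) : ℝ :=
  ∫ x, ∑ j : Fin 3, (∑ i : Fin 3, curlS u i x * pd i (⇑(u j)) x) * curlS u j x

open SchwartzMap
open scoped LineDeriv

/-- The Fourier transform turns a Fourier multiplier into a pointwise product. -/
theorem fourier_fourierMultiplierCLM_apply {m : E3 → ℂ} (hm : m.HasTemperateGrowth)
    (f : 𝓢(E3, ℂ)) (ξ : E3) :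
    𝓕 (fourierMultiplierCLM ℂ m f) ξ = m ξ * 𝓕 f ξ := by
  rw [fourierMultiplierCLM_apply, FourierTransform.fourier_fourierInv_eq,
    smulLeftCLM_apply_apply hm, smul_eq_mul]

/-- Schwartz functions with the same Fourier transform coincide. -/
theorem SchwartzMap.eq_of_fourier_eq {f g : 𝓢(E3, ℂ)} (h : ∀ ξ, 𝓕 f ξ = 𝓕 g ξ) : f = g := by
  have : 𝓕 f = 𝓕 g := SchwartzMap.ext h
  rw [← FourierTransform.fourierInv_fourier_eq (F := 𝓢(E3, ℂ)) f, this,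
    FourierTransform.fourierInv_fourier_eq]

theorem SchwartzMap.fourier_sub_apply (f g : 𝓢(E3, ℂ)) (ξ : E3) :
    𝓕 (f - g) ξ = 𝓕 f ξ - 𝓕 g ξ :=
  DFunLike.congr_fun (map_sub (FourierTransform.fourierCLM ℂ 𝓢(E3, ℂ)) f g) ξ

/-- The `L¹` norm of the inverse Fourier transform is invariant under dilation. -/
theorem integral_norm_fourierInv_comp_smul (m : E3 → ℂ) {r : ℝ} (hr : 0 < r) :
    ∫ t, ‖𝓕⁻ (fun ξ => m (r • ξ)) t‖ = ∫ t, ‖𝓕⁻ m t‖ := by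
  have key (t : E3) : 𝓕⁻ (fun ξ => m (r • ξ)) t = ((r ^ 3)⁻¹ : ℝ) • 𝓕⁻ m (r⁻¹ • t) := by
    simp only [Real.fourierInv_eq']
    have := Measure.integral_comp_smul (volume : Measure E3)
      (fun ξ => Complex.exp (↑(2 * π * inner ℝ ξ (r⁻¹ • t)) * I) • m ξ) r
    simp only [finrank_euclideanSpace, Fintype.card_fin] at this
    rw [abs_of_pos (by positivity)] at this
    rw [← this]
    congr 1
    ext ξ
    rw [inner_smul_left, inner_smul_right]
    simp [hr.ne']
  simp only [key, norm_smul]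
  rw [integral_const_mul]
  have := Measure.integral_comp_smul (volume : Measure E3) (fun t => ‖𝓕⁻ m t‖) r⁻¹
  simp only [finrank_euclideanSpace, Fintype.card_fin] at this
  rw [this, smul_eq_mul, abs_of_pos (by positivity), ← mul_assoc, Real.norm_eq_abs,
    abs_of_pos (by positivity)]
  have : r ^ 3 ≠ 0 := by positivity
  field_simp

/-- Dilates of a Schwartz multiplier are uniformly bounded on `L^∞`. -/
theorem norm_fourierMultiplierCLM_comp_smul_le (m : 𝓢(E3, ℂ)) {r : ℝ} (hr : 0 < r)
    (v : 𝓢(E3, ℂ)) {b : ℝ} (hv : ∀ x, ‖v x‖ ≤ b) (x : E3) :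
    ‖fourierMultiplierCLM ℂ (fun ξ => m (r • ξ)) v x‖ ≤ (∫ t, ‖𝓕⁻ (⇑m) t‖) * b := by
  let e : E3 ≃L[ℝ] E3 := ContinuousLinearEquiv.smulLeft (Units.mk0 r hr.ne')
  let mr : 𝓢(E3, ℂ) := compCLMOfContinuousLinearEquiv ℂ e m
  have hmr : (⇑mr) = fun ξ => m (r • ξ) := by
    ext ξ
    simp [mr, e, Units.smul_def]
  have hconv : fourierMultiplierCLM ℂ (fun ξ => m (r • ξ)) v =
      convolution (ContinuousLinearMap.mul ℂ ℂ) (𝓕⁻ mr) v := by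
    apply SchwartzMap.eq_of_fourier_eq
    intro ξ
    rw [← hmr, fourier_fourierMultiplierCLM_apply mr.hasTemperateGrowth, fourier_convolution]
    simp
  rw [hconv, convolution_apply, MeasureTheory.convolution_def]
  refine (norm_integral_le_of_norm_le (g := fun t => ‖(𝓕⁻ mr : 𝓢(E3, ℂ)) t‖ * b)
    ((𝓕⁻ mr : 𝓢(E3, ℂ)).integrable.norm.mul_const b) ?_).trans ?_
  · filter_upwards with t
    simp only [ContinuousLinearMap.mul_apply', norm_mul]
    exact mul_le_mul_of_nonneg_left (hv _) (norm_nonneg _)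
  · rw [integral_mul_const, fourierInv_coe, hmr, integral_norm_fourierInv_comp_smul _ hr]

/-- The Littlewood–Paley block as an operator on Schwartz functions. -/
def blockCLM (χ : E3 → ℝ) (j : ℤ) : 𝓢(E3, ℂ) →L[ℂ] 𝓢(E3, ℂ) :=
  fourierMultiplierCLM ℂ fun ξ =>
    ((χ ((2 : ℝ) ^ (-(j + 1)) • ξ) - χ ((2 : ℝ) ^ (-j) • ξ) : ℝ) : ℂ)

/-- The low-frequency projection as an operator on Schwartz functions. -/
def lowCLM (χ : E3 → ℝ) (j : ℤ) : 𝓢(E3, ℂ) →L[ℂ] 𝓢(E3, ℂ) :=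
  fourierMultiplierCLM ℂ fun ξ => ((χ ((2 : ℝ) ^ (-j) • ξ) : ℝ) : ℂ)

namespace IsLPCutoff

variable {χ : E3 → ℝ}

theorem hasTemperateGrowth_dilate (hχ : IsLPCutoff χ) (r : ℝ) :
    (fun ξ => χ (r • ξ)).HasTemperateGrowth := by
  have h : χ.HasTemperateGrowth := hχ.2.1.hasTemperateGrowth hχ.1
  have := h.comp (r • ContinuousLinearMap.id ℝ E3).hasTemperateGrowth
  exact this

theorem hasTemperateGrowth_low (hχ : IsLPCutoff χ) (j : ℤ) :
    (fun ξ => ((χ ((2 : ℝ) ^ (-j) • ξ) : ℝ) : ℂ)).HasTemperateGrowth :=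
  Complex.hasTemperateGrowth_ofReal.comp (hχ.hasTemperateGrowth_dilate _)

theorem hasTemperateGrowth_block (hχ : IsLPCutoff χ) (j : ℤ) :
    Function.HasTemperateGrowth fun ξ =>
      ((χ ((2 : ℝ) ^ (-(j + 1)) • ξ) - χ ((2 : ℝ) ^ (-j) • ξ) : ℝ) : ℂ) :=
  Complex.hasTemperateGrowth_ofReal.comp
    ((hχ.hasTemperateGrowth_dilate _).sub (hχ.hasTemperateGrowth_dilate _))

theorem fourier_blockCLM (hχ : IsLPCutoff χ) (j : ℤ) (f : 𝓢(E3, ℂ)) (ξ : E3) :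
    𝓕 (blockCLM χ j f) ξ =
      ((χ ((2 : ℝ) ^ (-(j + 1)) • ξ) - χ ((2 : ℝ) ^ (-j) • ξ) : ℝ) : ℂ) * 𝓕 f ξ :=
  fourier_fourierMultiplierCLM_apply (hχ.hasTemperateGrowth_block j) f ξ

theorem fourier_lowCLM (hχ : IsLPCutoff χ) (j : ℤ) (f : 𝓢(E3, ℂ)) (ξ : E3) :
    𝓕 (lowCLM χ j f) ξ = ((χ ((2 : ℝ) ^ (-j) • ξ) : ℝ) : ℂ) * 𝓕 f ξ :=
  fourier_fourierMultiplierCLM_apply (hχ.hasTemperateGrowth_low j) f ξ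

theorem coe_blockCLM (hχ : IsLPCutoff χ) (j : ℤ) (f : 𝓢(E3, ℂ)) :
    ⇑(blockCLM χ j f) = Dproj χ j f := by
  rw [blockCLM, fourierMultiplierCLM_apply, fourierInv_coe, Dproj]
  congr 1
  ext ξ
  rw [smulLeftCLM_apply_apply (hχ.hasTemperateGrowth_block j), smul_eq_mul, fourier_coe]

theorem blockCLM_eq_sub (hχ : IsLPCutoff χ) (j : ℤ) (f : 𝓢(E3, ℂ)) :
    blockCLM χ j f = lowCLM χ (j + 1) f - lowCLM χ j f := by
  apply SchwartzMap.eq_of_fourier_eq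
  intro ξ
  rw [SchwartzMap.fourier_sub_apply, hχ.fourier_blockCLM, hχ.fourier_lowCLM, hχ.fourier_lowCLM]
  push_cast
  ring

/-- The enlarged annular cutoff, equal to one on the annulus carrying the block symbol. -/
def _root_.annulusCutoff (χ : E3 → ℝ) (ξ : E3) : ℝ :=
  χ ((1 / 4 : ℝ) • ξ) - χ ((2 : ℝ) • ξ)

theorem annulusCutoff_eq_zero (hχ : IsLPCutoff χ) {ξ : E3} (h : ‖ξ‖ ≤ 3 / 8) :
    annulusCutoff χ ξ = 0 := by
  obtain ⟨-, -, -, -, -, h1, -⟩ := hχ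
  rw [annulusCutoff, h1, h1, sub_self] <;> rw [norm_smul, Real.norm_of_nonneg (by norm_num)] <;>
    linarith [norm_nonneg ξ]

theorem hasCompactSupport_annulusCutoff (hχ : IsLPCutoff χ) :
    HasCompactSupport (annulusCutoff χ) := by
  obtain ⟨-, -, -, -, -, -, h0⟩ := hχ
  refine HasCompactSupport.of_support_subset_isCompact (isCompact_closedBall (0 : E3) 6) ?_
  intro ξ hξ
  by_contra hn
  rw [mem_closedBall_zero_iff, not_le] at hn
  apply hξ
  rw [annulusCutoff, h0, h0, sub_self] <;> rw [norm_smul, Real.norm_of_nonneg (by norm_num)] <;>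
    linarith

/-- The block symbol is supported where the enlarged annular cutoff equals one. -/
theorem annulusCutoff_mul_block (hχ : IsLPCutoff χ) (j : ℤ) (ξ : E3) :
    annulusCutoff χ ((2 : ℝ) ^ (-j) • ξ) *
        (χ ((2 : ℝ) ^ (-(j + 1)) • ξ) - χ ((2 : ℝ) ^ (-j) • ξ)) =
      χ ((2 : ℝ) ^ (-(j + 1)) • ξ) - χ ((2 : ℝ) ^ (-j) • ξ) := by
  obtain ⟨-, -, -, -, -, h1, h0⟩ := hχ
  have hsplit : (2 : ℝ) ^ (-(j + 1)) • ξ = (1 / 2 : ℝ) • (2 : ℝ) ^ (-j) • ξ := by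
    rw [smul_smul, neg_add, zpow_add₀ (by norm_num), mul_comm]
    norm_num
  rw [hsplit]
  generalize (2 : ℝ) ^ (-j) • ξ = η
  have hn (c : ℝ) (hc : 0 ≤ c) : ‖c • η‖ = c * ‖η‖ := by
    rw [norm_smul, Real.norm_of_nonneg hc]
  have h2 := hn 2 (by norm_num)
  have h3 := hn (1 / 2) (by norm_num)
  have h4 := hn (1 / 4) (by norm_num)
  rcases le_or_gt ‖η‖ (3 / 4) with hs | hs
  · rw [h1 ((1 / 2 : ℝ) • η) (by rw [h3]; linarith [norm_nonneg η]), h1 η hs]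
    simp
  rcases le_or_gt ‖η‖ 3 with hl | hl
  · rw [annulusCutoff, h1 ((1 / 4 : ℝ) • η) (by rw [h4]; linarith),
      h0 ((2 : ℝ) • η) (by rw [h2]; linarith)]
    simp
  · rw [h0 ((1 / 2 : ℝ) • η) (by rw [h3]; linarith), h0 η (by linarith)]
    simp

/-- Dividing the annular cutoff by a power of the norm gives a test function. -/
theorem contDiff_annulusCutoff_div (hχ : IsLPCutoff χ) (k : ℕ) :
    ContDiff ℝ ((⊤ : ℕ∞) : WithTop ℕ∞) fun ξ => annulusCutoff χ ξ / (‖ξ‖ ^ 2) ^ k := by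
  have hs : ContDiff ℝ ((⊤ : ℕ∞) : WithTop ℕ∞) (annulusCutoff χ) :=
    (hχ.1.comp (contDiff_const_smul _)).sub (hχ.1.comp (contDiff_const_smul _))
  rw [contDiff_iff_contDiffAt]
  intro ξ
  rcases eq_or_ne ξ 0 with rfl | hξ
  · refine (contDiffAt_const (c := (0 : ℝ))).congr_of_eventuallyEq ?_
    filter_upwards [Metric.ball_mem_nhds (0 : E3) (show (0 : ℝ) < 3 / 8 by norm_num)] with η hη
    rw [mem_ball_zero_iff] at hη
    rw [hχ.annulusCutoff_eq_zero hη.le, zero_div]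
  · refine hs.contDiffAt.div ((contDiff_norm_sq ℝ).pow k).contDiffAt ?_
    positivity

/-- The test function `p · ψ / |ξ|^(2k)`, where `ψ` is the annular cutoff. -/
def _root_.annulusSymbol (hχ : IsLPCutoff χ) (k : ℕ) {p : E3 → ℂ}
    (hp : ContDiff ℝ ((⊤ : ℕ∞) : WithTop ℕ∞) p) : 𝓢(E3, ℂ) :=
  HasCompactSupport.toSchwartzMap
    (f := fun ξ => p ξ * ((annulusCutoff χ ξ / (‖ξ‖ ^ 2) ^ k : ℝ) : ℂ))
    (by
      refine HasCompactSupport.mul_left ?_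
      refine hχ.hasCompactSupport_annulusCutoff.mono ?_
      intro ξ hξ h0
      exact hξ (by simp [h0]))
    (hp.mul (Complex.ofRealCLM.contDiff.comp (hχ.contDiff_annulusCutoff_div k)))

theorem annulusSymbol_apply (hχ : IsLPCutoff χ) (k : ℕ) {p : E3 → ℂ}
    (hp : ContDiff ℝ ((⊤ : ℕ∞) : WithTop ℕ∞) p) (ξ : E3) :
    annulusSymbol hχ k hp ξ = p ξ * ((annulusCutoff χ ξ / (‖ξ‖ ^ 2) ^ k : ℝ) : ℂ) := rfl

end IsLPCutoff

theorem SchwartzMap.fourier_smul_apply (c : ℂ) (f : 𝓢(E3, ℂ)) (ξ : E3) :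
    𝓕 (c • f) ξ = c * 𝓕 f ξ :=
  DFunLike.congr_fun (map_smul (FourierTransform.fourierCLM ℂ 𝓢(E3, ℂ)) c f) ξ

theorem SchwartzMap.fourier_sum_apply (f : Fin 3 → 𝓢(E3, ℂ)) (ξ : E3) :
    𝓕 (∑ n, f n) ξ = ∑ n, 𝓕 (f n) ξ := by
  simp

theorem SchwartzMap.fourier_lineDeriv_single_apply (n : Fin 3) (f : 𝓢(E3, ℂ)) (ξ : E3) :
    𝓕 (∂_{EuclideanSpace.single n (1 : ℝ)} f) ξ = 2 * π * I * ξ n * 𝓕 f ξ := by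
  rw [fourier_lineDerivOp_eq, smul_apply,
    smulLeftCLM_apply_apply (hasTemperateGrowth_inner_left _)]
  simp [EuclideanSpace.inner_single_right]
  ring

theorem contDiff_coord_mul (i l : Fin 3) :
    ContDiff ℝ ((⊤ : ℕ∞) : WithTop ℕ∞) fun ξ : E3 => ((ξ i : ℝ) : ℂ) * ξ l := by
  have h (i : Fin 3) : ContDiff ℝ ((⊤ : ℕ∞) : WithTop ℕ∞) fun ξ : E3 => ((ξ i : ℝ) : ℂ) :=
    Complex.ofRealCLM.contDiff.comp (EuclideanSpace.proj (𝕜 := ℝ) i).contDiff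
  exact (h i).mul (h l)

theorem contDiff_coord_mul_mul (n i l : Fin 3) :
    ContDiff ℝ ((⊤ : ℕ∞) : WithTop ℕ∞)
      fun ξ : E3 => (2 * π * I)⁻¹ * (((ξ n : ℝ) : ℂ) * (((ξ i : ℝ) : ℂ) * ξ l)) := by
  have h : ContDiff ℝ ((⊤ : ℕ∞) : WithTop ℕ∞) fun ξ : E3 => ((ξ n : ℝ) : ℂ) :=
    Complex.ofRealCLM.contDiff.comp (EuclideanSpace.proj (𝕜 := ℝ) n).contDiff
  exact contDiff_const.mul (h.mul (contDiff_coord_mul i l))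

/-- Block bounds for a function obtained from `W₁, W₂` by second-order Riesz transforms: the block
itself, and an antidivergence of it, are controlled by the blocks of `W₁, W₂`. -/
theorem IsLPCutoff.exists_block_bound {χ : E3 → ℝ} (hχ : IsLPCutoff χ) :
    ∃ K : ℝ, 0 ≤ K ∧ ∀ (f W₁ W₂ : 𝓢(E3, ℂ)) (i l₁ l₂ : Fin 3),
      (∀ ξ, ((‖ξ‖ ^ 2 : ℝ) : ℂ) * 𝓕 f ξ = ξ i * (ξ l₁ * 𝓕 W₁ ξ - ξ l₂ * 𝓕 W₂ ξ)) →
      ∀ (j : ℤ) (β : ℝ), (∀ x, ‖blockCLM χ j W₁ x‖ ≤ β) → (∀ x, ‖blockCLM χ j W₂ x‖ ≤ β) →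
        (∀ x, ‖blockCLM χ j f x‖ ≤ K * β) ∧
        ∃ G : Fin 3 → 𝓢(E3, ℂ),
          blockCLM χ j f = ∑ n, ∂_{EuclideanSpace.single n (1 : ℝ)} (G n) ∧
          ∀ n x, ‖G n x‖ ≤ K * ((2 : ℝ) ^ (-j) * β) := by
  let a (i l : Fin 3) : 𝓢(E3, ℂ) := annulusSymbol hχ 1 (contDiff_coord_mul i l)
  let d (n i l : Fin 3) : 𝓢(E3, ℂ) := annulusSymbol hχ 2 (contDiff_coord_mul_mul n i l)
  obtain ⟨K, hK⟩ := Finite.exists_le fun p : Fin 3 × Fin 3 × Fin 3 =>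
    max (∫ t, ‖𝓕⁻ (⇑(a p.2.1 p.2.2)) t‖) (∫ t, ‖𝓕⁻ (⇑(d p.1 p.2.1 p.2.2)) t‖)
  have hKa (i l) : (∫ t, ‖𝓕⁻ (⇑(a i l)) t‖) ≤ K := (le_max_left _ _).trans (hK (0, i, l))
  have hKd (n i l) : (∫ t, ‖𝓕⁻ (⇑(d n i l)) t‖) ≤ K := (le_max_right _ _).trans (hK (n, i, l))
  have hK0 : 0 ≤ K := (integral_nonneg fun _ => norm_nonneg _).trans (hKa 0 0)
  refine ⟨2 * K, by positivity, fun f W₁ W₂ i l₁ l₂ hf j β h₁ h₂ => ?_⟩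
  have hβ : 0 ≤ β := (norm_nonneg _).trans (h₁ 0)
  set c : ℝ := (2 : ℝ) ^ (-j) with hc
  have hc0 : 0 < c := by positivity
  have htg (m : 𝓢(E3, ℂ)) : (fun ξ => m (c • ξ)).HasTemperateGrowth :=
    m.hasTemperateGrowth.comp (c • ContinuousLinearMap.id ℝ E3).hasTemperateGrowth
  let T (m v : 𝓢(E3, ℂ)) : 𝓢(E3, ℂ) := fourierMultiplierCLM ℂ (fun ξ => m (c • ξ)) v
  have hT (m v : 𝓢(E3, ℂ)) (hm : (∫ t, ‖𝓕⁻ (⇑m) t‖) ≤ K) (hv : ∀ x, ‖v x‖ ≤ β) (x : E3) :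
      ‖T m v x‖ ≤ K * β :=
    (norm_fourierMultiplierCLM_comp_smul_le m hc0 v hv x).trans
      (mul_le_mul_of_nonneg_right hm hβ)
  have hTF (m v : 𝓢(E3, ℂ)) (ξ : E3) : 𝓕 (T m v) ξ = m (c • ξ) * 𝓕 v ξ :=
    fourier_fourierMultiplierCLM_apply (htg m) v ξ
  have hblock (ξ : E3) := hχ.annulusCutoff_mul_block j ξ
  rw [← hc] at hblock
  have hid : blockCLM χ j f = T (a i l₁) (blockCLM χ j W₁) - T (a i l₂) (blockCLM χ j W₂) := by
    apply SchwartzMap.eq_of_fourier_eq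
    intro ξ
    simp only [SchwartzMap.fourier_sub_apply, hTF, hχ.fourier_blockCLM]
    simp only [a, IsLPCutoff.annulusSymbol_apply, ← hc]
    rcases eq_or_ne ξ 0 with rfl | hξ
    · simp
    have hn : ((‖ξ‖ : ℝ) : ℂ) ≠ 0 := by simpa using hξ
    have hcC : (c : ℂ) ≠ 0 := by exact_mod_cast hc0.ne'
    have hfξ : 𝓕 f ξ = ξ i * (ξ l₁ * 𝓕 W₁ ξ - ξ l₂ * 𝓕 W₂ ξ) / ((‖ξ‖ : ℝ) : ℂ) ^ 2 := by
      rw [eq_div_iff (pow_ne_zero 2 hn), ← hf ξ]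
      push_cast
      ring
    have hb := congrArg Complex.ofReal (hblock ξ)
    rw [hfξ]
    rw [Complex.ofReal_mul] at hb
    generalize ((χ ((2 : ℝ) ^ (-(j + 1)) • ξ) - χ (c • ξ) : ℝ) : ℂ) = q at hb ⊢
    generalize annulusCutoff χ (c • ξ) = s at hb ⊢
    simp only [norm_smul, Real.norm_of_nonneg hc0.le, PiLp.smul_apply, smul_eq_mul]
    push_cast
    field_simp
    linear_combination (-(ξ i : ℂ) * (ξ l₁ * 𝓕 W₁ ξ - ξ l₂ * 𝓕 W₂ ξ)) * hb
  have hdiv : blockCLM χ j f = ∑ n, ∂_{EuclideanSpace.single n (1 : ℝ)}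
      ((c : ℂ) • (T (d n i l₁) (blockCLM χ j W₁) - T (d n i l₂) (blockCLM χ j W₂))) := by
    apply SchwartzMap.eq_of_fourier_eq
    intro ξ
    simp only [hid, SchwartzMap.fourier_sub_apply, hTF, SchwartzMap.fourier_sum_apply,
      SchwartzMap.fourier_lineDeriv_single_apply, SchwartzMap.fourier_smul_apply]
    simp only [a, d, IsLPCutoff.annulusSymbol_apply]
    rcases eq_or_ne ξ 0 with rfl | hξ
    · simp
    have hn : ((‖ξ‖ : ℝ) : ℂ) ≠ 0 := by simpa using hξ
    have hcC : (c : ℂ) ≠ 0 := by exact_mod_cast hc0.ne'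
    have hsq : ((‖ξ‖ : ℝ) : ℂ) ^ 2 = (ξ 0 : ℂ) ^ 2 + (ξ 1 : ℂ) ^ 2 + (ξ 2 : ℂ) ^ 2 := by
      have := EuclideanSpace.real_norm_sq_eq ξ
      rw [Fin.sum_univ_three] at this
      exact_mod_cast this
    generalize annulusCutoff χ (c • ξ) = s
    simp only [norm_smul, Real.norm_of_nonneg hc0.le, PiLp.smul_apply, smul_eq_mul,
      Fin.sum_univ_three]
    push_cast
    have hpi : (π : ℂ) ≠ 0 := by exact_mod_cast Real.pi_ne_zero
    have hI := Complex.I_ne_zero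
    field_simp
    rw [hsq]
    ring
  refine ⟨fun x => ?_, _, hdiv, fun n x => ?_⟩
  · rw [hid, sub_apply]
    refine (norm_sub_le _ _).trans ?_
    linarith [hT (a i l₁) _ (hKa _ _) h₁ x, hT (a i l₂) _ (hKa _ _) h₂ x]
  · rw [smul_apply, norm_smul, sub_apply, Complex.norm_real, Real.norm_of_nonneg hc0.le]
    have h := (norm_sub_le (T (d n i l₁) (blockCLM χ j W₁) x) (T (d n i l₂) (blockCLM χ j W₂) x))
    have h' : ‖T (d n i l₁) (blockCLM χ j W₁) x - T (d n i l₂) (blockCLM χ j W₂) x‖ ≤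
        2 * K * β := by
      linarith [hT (d n i l₁) _ (hKd _ _ _) h₁ x, hT (d n i l₂) _ (hKd _ _ _) h₂ x]
    calc _ ≤ c * (2 * K * β) := mul_le_mul_of_nonneg_left h' hc0.le
      _ = _ := by ring

theorem SchwartzMap.integrable_mul (f g : 𝓢(E3, ℂ)) : Integrable fun x => f x * g x :=
  (pairing (ContinuousLinearMap.mul ℂ ℂ) f g).integrable

namespace IsLPCutoff

variable {χ : E3 → ℝ}

theorem integral_lowCLM_mul (hχ : IsLPCutoff χ) (j : ℤ) (f H : 𝓢(E3, ℂ)) :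
    ∫ x, lowCLM χ j f x * H x =
      ∫ ξ, ((χ ((2 : ℝ) ^ (-j) • ξ) : ℝ) : ℂ) * (𝓕 f ξ * (𝓕⁻ H : 𝓢(E3, ℂ)) ξ) := by
  have h := integral_fourierInv_mul_eq (𝓕 (lowCLM χ j f)) H
  rw [FourierTransform.fourierInv_fourier_eq] at h
  rw [h]
  simp only [hχ.fourier_lowCLM, mul_assoc]

/-- Dominated convergence for low-frequency projections tested against a Schwartz function. -/
theorem tendsto_integral_lowCLM_mul (hχ : IsLPCutoff χ) (f H : 𝓢(E3, ℂ)) (k : ℕ → ℤ) (c : ℝ)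
    (hk : ∀ ξ ≠ 0, Tendsto (fun M => χ ((2 : ℝ) ^ (-k M) • ξ)) atTop (nhds c)) :
    Tendsto (fun M => ∫ x, lowCLM χ (k M) f x * H x) atTop (nhds (c * ∫ x, f x * H x)) := by
  have h := integral_fourierInv_mul_eq (𝓕 f) H
  rw [FourierTransform.fourierInv_fourier_eq] at h
  rw [h, ← integral_const_mul]
  simp only [hχ.integral_lowCLM_mul]
  have hint := SchwartzMap.integrable_mul (𝓕 f) (𝓕⁻ H)
  refine tendsto_integral_of_dominated_convergence
    (fun ξ => ‖𝓕 f ξ * (𝓕⁻ H : 𝓢(E3, ℂ)) ξ‖) (fun M => ?_) hint.norm (fun M => ?_) ?_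
  · refine AEStronglyMeasurable.mul ?_ hint.aestronglyMeasurable
    exact (Complex.continuous_ofReal.comp
      (hχ.1.continuous.comp (continuous_const_smul _))).aestronglyMeasurable
  · filter_upwards with ξ
    rw [norm_mul, Complex.norm_real, Real.norm_of_nonneg (hχ.2.2.2.1 _)]
    exact mul_le_of_le_one_left (norm_nonneg _) (hχ.2.2.2.2.1 _)
  · filter_upwards [Measure.ae_ne volume (0 : E3)] with ξ hξ
    exact ((Complex.continuous_ofReal.tendsto c).comp (hk ξ hξ)).mul_const _

theorem tendsto_integral_lowCLM_high (hχ : IsLPCutoff χ) (f H : 𝓢(E3, ℂ)) (N : ℤ) :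
    Tendsto (fun M : ℕ => ∫ x, lowCLM χ (N + M) f x * H x) atTop (nhds (∫ x, f x * H x)) := by
  have := hχ.tendsto_integral_lowCLM_mul f H (fun M => N + M) 1 (fun ξ hξ => ?_)
  · simpa using this
  refine tendsto_const_nhds.congr' ?_
  have h2 : Tendsto (fun M : ℕ => (2 : ℝ) ^ (-N) * (1 / 2 : ℝ) ^ M * ‖ξ‖) atTop (nhds 0) := by
    have := ((tendsto_pow_atTop_nhds_zero_of_lt_one (r := (1 / 2 : ℝ)) (by norm_num)
      (by norm_num)).const_mul ((2 : ℝ) ^ (-N))).mul_const ‖ξ‖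
    simpa using this
  filter_upwards [h2.eventually_le_const (show (0 : ℝ) < 3 / 4 by norm_num)] with M hM
  refine (hχ.2.2.2.2.2.1 _ ?_).symm
  rw [norm_smul, Real.norm_of_nonneg (by positivity)]
  refine le_trans (le_of_eq ?_) hM
  rw [neg_add, zpow_add₀ (by norm_num), zpow_neg _ (M : ℤ), zpow_natCast]
  simp

theorem tendsto_integral_lowCLM_zero (hχ : IsLPCutoff χ) (f H : 𝓢(E3, ℂ)) (N : ℤ) :
    Tendsto (fun M : ℕ => ∫ x, lowCLM χ (N - M) f x * H x) atTop (nhds 0) := by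
  have := hχ.tendsto_integral_lowCLM_mul f H (fun M => N - M) 0 (fun ξ hξ => ?_)
  · simpa using this
  refine tendsto_const_nhds.congr' ?_
  have h2 : Tendsto (fun M : ℕ => (2 : ℝ) ^ (-N) * ‖ξ‖ * (2 : ℝ) ^ M) atTop atTop :=
    (tendsto_pow_atTop_atTop_of_one_lt (r := (2 : ℝ)) (by norm_num)).const_mul_atTop
      (by positivity)
  filter_upwards [h2.eventually_gt_atTop (4 / 3)] with M hM
  refine (hχ.2.2.2.2.2.2 _ ?_).symm
  rw [norm_smul, Real.norm_of_nonneg (by positivity)]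
  refine lt_of_lt_of_eq hM ?_
  rw [neg_sub, sub_eq_add_neg, zpow_add₀ (by norm_num), zpow_natCast]
  ring

end IsLPCutoff

/-- Pairing with a bounded function. -/
theorem norm_integral_mul_le_of_bound (f H : 𝓢(E3, ℂ)) {a : ℝ} (hf : ∀ x, ‖f x‖ ≤ a) :
    ‖∫ x, f x * H x‖ ≤ a * ∫ x, ‖H x‖ := by
  rw [← integral_const_mul]
  refine norm_integral_le_of_norm_le (H.integrable.norm.const_mul a) ?_
  filter_upwards with x
  rw [norm_mul]
  exact mul_le_mul_of_nonneg_right (hf x) (norm_nonneg _)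

/-- Pairing with the divergence of a bounded vector field. -/
theorem norm_integral_div_mul_le_of_bound (G : Fin 3 → 𝓢(E3, ℂ)) (H : 𝓢(E3, ℂ)) {a : ℝ}
    (hG : ∀ n x, ‖G n x‖ ≤ a) :
    ‖∫ x, (∑ n, ∂_{EuclideanSpace.single n (1 : ℝ)} (G n)) x * H x‖ ≤
      a * ∑ n : Fin 3, ∫ x, ‖(∂_{EuclideanSpace.single n (1 : ℝ)} H : 𝓢(E3, ℂ)) x‖ := by
  have h : ∫ x, (∑ n, ∂_{EuclideanSpace.single n (1 : ℝ)} (G n)) x * H x =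
      ∑ n, -∫ x, G n x * (∂_{EuclideanSpace.single n (1 : ℝ)} H : 𝓢(E3, ℂ)) x := by
    simp only [_root_.sum_apply, Finset.sum_mul]
    rw [integral_finsetSum _ fun n _ => SchwartzMap.integrable_mul _ _]
    refine Finset.sum_congr rfl fun n _ => ?_
    rw [integral_mul_lineDerivOp_right_eq_neg_left, neg_neg]
  rw [h, Finset.mul_sum]
  refine norm_sum_le_of_le _ fun n _ => ?_
  rw [norm_neg]
  exact norm_integral_mul_le_of_bound _ _ (hG n)

theorem sum_range_geometric_le {q : ℝ} (hq : 0 ≤ q) (hq1 : q < 1) (M : ℕ) :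
    ∑ m ∈ Finset.range M, q ^ m ≤ (1 - q)⁻¹ := by
  rw [← tsum_geometric_of_lt_one hq hq1]
  exact (summable_geometric_of_lt_one hq hq1).sum_le_tsum _ fun m _ => by positivity

/-- Splitting at frequency `2^N`: low blocks are tested against `H` and high blocks, written as
divergences, against `∇H`. -/
theorem IsLPCutoff.norm_integral_mul_le {χ : E3 → ℝ} (hχ : IsLPCutoff χ) {α : ℝ} (hα : 0 < α)
    (hα1 : α < 1) (f H : 𝓢(E3, ℂ)) {A : ℝ} (hA : 0 ≤ A)
    (hP : ∀ (j : ℤ) (x), ‖blockCLM χ j f x‖ ≤ A * (2 : ℝ) ^ (j * α))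
    (hG : ∀ j : ℤ, ∃ G : Fin 3 → 𝓢(E3, ℂ),
      blockCLM χ j f = ∑ n, ∂_{EuclideanSpace.single n (1 : ℝ)} (G n) ∧
      ∀ n x, ‖G n x‖ ≤ A * ((2 : ℝ) ^ (-j) * (2 : ℝ) ^ (j * α))) (N : ℤ) :
    ‖∫ x, f x * H x‖ ≤
      A * ((2 : ℝ) ^ (N * α) * (1 - (2 : ℝ) ^ (-α))⁻¹ * (∫ x, ‖H x‖) +
        (2 : ℝ) ^ (-(N * (1 - α))) * (1 - (2 : ℝ) ^ (-(1 - α)))⁻¹ *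
          ∑ n : Fin 3, ∫ x, ‖(∂_{EuclideanSpace.single n (1 : ℝ)} H : 𝓢(E3, ℂ)) x‖) := by
  set X := ∫ x, ‖H x‖
  set Z := ∑ n : Fin 3, ∫ x, ‖(∂_{EuclideanSpace.single n (1 : ℝ)} H : 𝓢(E3, ℂ)) x‖
  have hX : 0 ≤ X := integral_nonneg fun _ => norm_nonneg _
  have hZ : 0 ≤ Z := Finset.sum_nonneg fun _ _ => integral_nonneg fun _ => norm_nonneg _
  have hsub (j : ℤ) : ∫ x, blockCLM χ j f x * H x =
      (∫ x, lowCLM χ (j + 1) f x * H x) - ∫ x, lowCLM χ j f x * H x := by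
    rw [← integral_sub (SchwartzMap.integrable_mul _ _) (SchwartzMap.integrable_mul _ _),
      hχ.blockCLM_eq_sub]
    simp only [_root_.sub_apply, sub_mul]
  have hlow (j : ℤ) : ‖∫ x, blockCLM χ j f x * H x‖ ≤ A * (2 : ℝ) ^ (j * α) * X :=
    norm_integral_mul_le_of_bound _ _ (hP j)
  have hhigh (j : ℤ) : ‖∫ x, blockCLM χ j f x * H x‖ ≤ A * (2 : ℝ) ^ (-(j * (1 - α))) * Z := by
    obtain ⟨G, hfG, hGb⟩ := hG j
    rw [hfG]
    refine (norm_integral_div_mul_le_of_bound G H hGb).trans_eq ?_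
    congr 2
    rw [← Real.rpow_intCast, ← Real.rpow_add (by norm_num)]
    congr 1
    push_cast
    ring
  have hq (s : ℝ) (hs : 0 < s) : (2 : ℝ) ^ (-s) < 1 :=
    Real.rpow_lt_one_of_one_lt_of_neg (by norm_num) (by linarith)
  have hup (M : ℕ) : ‖(∫ x, lowCLM χ (N + M) f x * H x) - ∫ x, lowCLM χ N f x * H x‖ ≤
      A * ((2 : ℝ) ^ (-(N * (1 - α))) * (1 - (2 : ℝ) ^ (-(1 - α)))⁻¹ * Z) := by
    have htel := Finset.sum_range_sub (fun m : ℕ => ∫ x, lowCLM χ (N + m) f x * H x) M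
    simp only [Nat.cast_zero, add_zero] at htel
    rw [← htel]
    calc _ ≤ ∑ m ∈ Finset.range M,
          A * (2 : ℝ) ^ (-(N * (1 - α))) * Z * ((2 : ℝ) ^ (-(1 - α))) ^ m := by
          refine norm_sum_le_of_le _ fun m _ => ?_
          have := hhigh (N + m)
          rw [hsub] at this
          push_cast
          rw [← add_assoc]
          refine this.trans_eq ?_
          rw [← Real.rpow_natCast, ← Real.rpow_mul (by norm_num), mul_right_comm _ Z,
            mul_assoc A ((2 : ℝ) ^ (-(N * (1 - α)))), ← Real.rpow_add (by norm_num)]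
          congr 3
          push_cast
          ring
      _ ≤ A * (2 : ℝ) ^ (-(N * (1 - α))) * Z * (1 - (2 : ℝ) ^ (-(1 - α)))⁻¹ := by
          rw [← Finset.mul_sum]
          exact mul_le_mul_of_nonneg_left
            (sum_range_geometric_le (by positivity) (hq _ (by linarith)) M) (by positivity)
      _ = _ := by ring
  have hdown (M : ℕ) : ‖(∫ x, lowCLM χ N f x * H x) - ∫ x, lowCLM χ (N - M) f x * H x‖ ≤
      A * ((2 : ℝ) ^ (N * α) * (1 - (2 : ℝ) ^ (-α))⁻¹ * X) := by
    have htel := Finset.sum_range_sub' (fun m : ℕ => ∫ x, lowCLM χ (N - m) f x * H x) M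
    simp only [Nat.cast_zero, sub_zero] at htel
    rw [← htel]
    calc _ ≤ ∑ m ∈ Finset.range M, A * (2 : ℝ) ^ (N * α) * X * ((2 : ℝ) ^ (-α)) ^ m := by
          refine norm_sum_le_of_le _ fun m _ => ?_
          have := hlow (N - (m + 1))
          rw [hsub, show N - (m + 1 : ℤ) + 1 = N - m by ring] at this
          push_cast
          refine this.trans ?_
          rw [← Real.rpow_natCast, ← Real.rpow_mul (by norm_num), mul_right_comm _ X,
            mul_assoc A ((2 : ℝ) ^ (N * α)), ← Real.rpow_add (by norm_num)]
          gcongr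
          · norm_num
          · push_cast
            nlinarith
      _ ≤ A * (2 : ℝ) ^ (N * α) * X * (1 - (2 : ℝ) ^ (-α))⁻¹ := by
          rw [← Finset.mul_sum]
          exact mul_le_mul_of_nonneg_left
            (sum_range_geometric_le (by positivity) (hq _ hα) M) (by positivity)
      _ = _ := by ring
  have hlim := ((hχ.tendsto_integral_lowCLM_high f H N).sub
    (hχ.tendsto_integral_lowCLM_zero f H N)).norm
  rw [sub_zero] at hlim
  refine le_of_tendsto' hlim fun M => ?_
  refine (norm_sub_le_norm_sub_add_norm_sub _ (∫ x, lowCLM χ N f x * H x) _).trans ?_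
  rw [mul_add, add_comm]
  exact add_le_add (hdown M) (hup M)

/-- A real Schwartz function regarded as a complex one. -/
def SchwartzMap.complexify (f : 𝓢(E3, ℝ)) : 𝓢(E3, ℂ) :=
  postcompCLM Complex.ofRealCLM f

namespace SchwartzMap

theorem complexify_apply (f : 𝓢(E3, ℝ)) (x : E3) : f.complexify x = (f x : ℂ) := rfl

theorem complexify_sub (f g : 𝓢(E3, ℝ)) :
    (f - g).complexify = f.complexify - g.complexify := map_sub _ f g

theorem complexify_lineDeriv (m : E3) (f : 𝓢(E3, ℝ)) :
    (∂_{m} f).complexify = ∂_{m} f.complexify := by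
  ext x
  have h : HasFDerivAt f.complexify (Complex.ofRealCLM.comp (fderiv ℝ f x)) x :=
    Complex.ofRealCLM.hasFDerivAt.comp x (f.hasFDerivAt x)
  rw [lineDerivOp_apply_eq_fderiv, h.fderiv]
  rfl

/-- The pointwise product of two real Schwartz functions. -/
def realMul (f g : 𝓢(E3, ℝ)) : 𝓢(E3, ℝ) :=
  pairing (ContinuousLinearMap.mul ℝ ℝ) f g

theorem realMul_apply (f g : 𝓢(E3, ℝ)) (x : E3) : realMul f g x = f x * g x := rfl

theorem lineDeriv_realMul_apply (m : E3) (f g : 𝓢(E3, ℝ)) (x : E3) :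
    (∂_{m} (realMul f g)) x = f x * (∂_{m} g) x + (∂_{m} f) x * g x := by
  have h : HasFDerivAt (realMul f g) (f x • fderiv ℝ g x + g x • fderiv ℝ f x) x :=
    (f.hasFDerivAt x).mul (g.hasFDerivAt x)
  rw [lineDerivOp_apply_eq_fderiv, h.fderiv, lineDerivOp_apply_eq_fderiv,
    lineDerivOp_apply_eq_fderiv]
  simp [mul_comm]

theorem integrable_sq (f : 𝓢(E3, ℝ)) : Integrable fun x => f x ^ 2 := by
  simp only [sq]
  exact (realMul f f).integrable

theorem eLpNorm_two_rpow_two (f : 𝓢(E3, ℝ)) :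
    eLpNorm f 2 volume ^ (2 : ℝ) = ENNReal.ofReal (∫ x, f x ^ 2) := by
  rw [eLpNorm_eq_lintegral_rpow_enorm_toReal (by norm_num) (by norm_num), ← ENNReal.rpow_mul,
    ofReal_integral_eq_lintegral_ofReal f.integrable_sq (ae_of_all _ fun x => sq_nonneg _)]
  norm_num
  refine lintegral_congr fun x => ?_
  rw [Real.enorm_eq_ofReal_abs, ← ENNReal.ofReal_pow (abs_nonneg _), sq_abs]

theorem integral_norm_complexify_realMul_le (f g : 𝓢(E3, ℝ)) :
    ∫ x, ‖(realMul f g).complexify x‖ ≤ (∫ x, f x ^ 2) + ∫ x, g x ^ 2 := by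
  rw [← integral_add f.integrable_sq g.integrable_sq]
  refine integral_mono (realMul f g).complexify.integrable.norm
    (f.integrable_sq.add g.integrable_sq) fun x => ?_
  simp only [complexify_apply, realMul_apply, Complex.norm_real, Real.norm_eq_abs, abs_mul]
  nlinarith [sq_nonneg (|f x| - |g x|), sq_abs (f x), sq_abs (g x), sq_nonneg (f x),
    sq_nonneg (g x)]

theorem integral_norm_lineDeriv_complexify_realMul_le (m : E3) (f g : 𝓢(E3, ℝ)) {ε : ℝ}
    (hε : 0 < ε) :
    ∫ x, ‖(∂_{m} (realMul f g).complexify : 𝓢(E3, ℂ)) x‖ ≤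
      ε * ((∫ x, (∂_{m} f : 𝓢(E3, ℝ)) x ^ 2) + ∫ x, (∂_{m} g : 𝓢(E3, ℝ)) x ^ 2) +
        ε⁻¹ * ((∫ x, f x ^ 2) + ∫ x, g x ^ 2) := by
  have hd : Integrable fun x => (∂_{m} f : 𝓢(E3, ℝ)) x ^ 2 + (∂_{m} g : 𝓢(E3, ℝ)) x ^ 2 :=
    (∂_{m} f : 𝓢(E3, ℝ)).integrable_sq.add (∂_{m} g : 𝓢(E3, ℝ)).integrable_sq
  have hf : Integrable fun x => f x ^ 2 + g x ^ 2 := f.integrable_sq.add g.integrable_sq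
  rw [← integral_add f.integrable_sq g.integrable_sq, ← integral_add
    (∂_{m} f : 𝓢(E3, ℝ)).integrable_sq (∂_{m} g : 𝓢(E3, ℝ)).integrable_sq,
    ← integral_const_mul, ← integral_const_mul,
    ← integral_add (hd.const_mul ε) (hf.const_mul ε⁻¹)]
  refine integral_mono (∂_{m} (realMul f g).complexify : 𝓢(E3, ℂ)).integrable.norm
    ((hd.const_mul ε).add (hf.const_mul ε⁻¹)) fun x => ?_
  have young (a c : ℝ) : |a * c| ≤ ε * a ^ 2 + ε⁻¹ * c ^ 2 := by
    have h1 : ε * (|a| - ε⁻¹ * |c|) ^ 2 = ε * a ^ 2 - 2 * (|a| * |c|) + ε⁻¹ * c ^ 2 := by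
      rw [sub_sq, mul_pow, sq_abs, sq_abs]
      field_simp
    have h2 : 0 ≤ ε * (|a| - ε⁻¹ * |c|) ^ 2 := by positivity
    have h3 : 0 ≤ |a| * |c| := by positivity
    rw [abs_mul]
    linarith
  simp only [← complexify_lineDeriv, complexify_apply, lineDeriv_realMul_apply,
    Complex.norm_real, Real.norm_eq_abs]
  refine (abs_add_le _ _).trans ?_
  have h1 := young ((∂_{m} g) x) (f x)
  have h2 := young ((∂_{m} f) x) (g x)
  rw [mul_comm] at h1
  linarith

end SchwartzMap

/-- The vorticity of a Schwartz vector field, as a Schwartz vector field. -/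
def vorticityS (u : Fin 3 → 𝓢(E3, ℝ)) (k : Fin 3) : 𝓢(E3, ℝ) :=
  ∂_{EuclideanSpace.single (k + 1) (1 : ℝ)} (u (k + 2)) -
    ∂_{EuclideanSpace.single (k + 2) (1 : ℝ)} (u (k + 1))

theorem coe_vorticityS (u : Fin 3 → 𝓢(E3, ℝ)) (k : Fin 3) : ⇑(vorticityS u k) = curlS u k := by
  fin_cases k <;> rfl

theorem pd_coe (i : Fin 3) (f : 𝓢(E3, ℝ)) :
    pd i f = ⇑(∂_{EuclideanSpace.single i (1 : ℝ)} f : 𝓢(E3, ℝ)) := rfl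

/-- The Biot–Savart law on the Fourier side. -/
theorem normSq_mul_fourier_lineDeriv (u : Fin 3 → 𝓢(E3, ℝ))
    (hu : ∀ x, ∑ i : Fin 3, pd i (⇑(u i)) x = 0) (i k : Fin 3) (ξ : E3) :
    ((‖ξ‖ ^ 2 : ℝ) : ℂ) *
        𝓕 (∂_{EuclideanSpace.single i (1 : ℝ)} (u k) : 𝓢(E3, ℝ)).complexify ξ =
      ξ i * (ξ (k + 2) * 𝓕 (vorticityS u (k + 1)).complexify ξ -
        ξ (k + 1) * 𝓕 (vorticityS u (k + 2)).complexify ξ) := by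
  have hdiv : ∑ n : Fin 3, (ξ n : ℂ) * 𝓕 (u n).complexify ξ = 0 := by
    have h0 : ∑ n : Fin 3, ∂_{EuclideanSpace.single n (1 : ℝ)} (u n).complexify = 0 := by
      ext x
      have := congrArg (fun r : ℝ => (r : ℂ)) (hu x)
      simp only [pd_coe, Complex.ofReal_sum, Complex.ofReal_zero] at this
      rw [_root_.sum_apply]
      simp only [← complexify_lineDeriv, complexify_apply]
      exact this
    have h1 := congrArg (fun g : 𝓢(E3, ℂ) => 𝓕 g ξ) h0
    simp only [SchwartzMap.fourier_sum_apply, SchwartzMap.fourier_lineDeriv_single_apply] at h1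
    have h2 : 𝓕 (0 : 𝓢(E3, ℂ)) ξ = 0 := by simp [FourierTransform.fourier_zero]
    rw [h2] at h1
    have h3 : (2 * π * I : ℂ) ≠ 0 := Complex.two_pi_I_ne_zero
    refine (mul_eq_zero.mp (?_ : (2 * π * I : ℂ) * _ = 0)).resolve_left h3
    rw [Finset.mul_sum, ← h1]
    exact Finset.sum_congr rfl fun n _ => by ring
  have hsum : ((‖ξ‖ ^ 2 : ℝ) : ℂ) = (ξ k : ℂ) ^ 2 + (ξ (k + 1) : ℂ) ^ 2 + (ξ (k + 2) : ℂ) ^ 2 := by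
    rw [EuclideanSpace.real_norm_sq_eq, Fin.sum_univ_three]
    fin_cases k <;> simp <;> ring
  have hdiv' : (ξ k : ℂ) * 𝓕 (u k).complexify ξ + ξ (k + 1) * 𝓕 (u (k + 1)).complexify ξ +
      ξ (k + 2) * 𝓕 (u (k + 2)).complexify ξ = 0 := by
    rw [← hdiv, Fin.sum_univ_three]
    fin_cases k <;> simp <;> ring
  have e1 : k + 1 + 1 = k + 2 := by fin_cases k <;> rfl
  have e2 : k + 1 + 2 = k := by fin_cases k <;> rfl
  have e3 : k + 2 + 1 = k := by fin_cases k <;> rfl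
  have e4 : k + 2 + 2 = k + 1 := by fin_cases k <;> rfl
  simp only [vorticityS, complexify_sub, complexify_lineDeriv, SchwartzMap.fourier_sub_apply,
    SchwartzMap.fourier_lineDeriv_single_apply, e1, e2, e3, e4, hsum]
  linear_combination (2 * π * I * ξ i * ξ k : ℂ) * hdiv'

theorem vortexStretch_eq_sum (u : Fin 3 → 𝓢(E3, ℝ)) :
    (vortexStretch u : ℂ) = ∑ k, ∑ i,
      ∫ x, (∂_{EuclideanSpace.single i (1 : ℝ)} (u k) : 𝓢(E3, ℝ)).complexify x *
        (realMul (vorticityS u i) (vorticityS u k)).complexify x := by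
  have h (x : E3) : ((∑ j : Fin 3, (∑ i : Fin 3, curlS u i x * pd i (⇑(u j)) x) * curlS u j x : ℝ)
      : ℂ) = ∑ k, ∑ i,
      (∂_{EuclideanSpace.single i (1 : ℝ)} (u k) : 𝓢(E3, ℝ)).complexify x *
        (realMul (vorticityS u i) (vorticityS u k)).complexify x := by
    push_cast
    refine Finset.sum_congr rfl fun k _ => ?_
    rw [Finset.sum_mul]
    refine Finset.sum_congr rfl fun i _ => ?_
    rw [complexify_apply, complexify_apply, realMul_apply, coe_vorticityS, coe_vorticityS, pd_coe]
    push_cast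
    ring
  rw [vortexStretch, ← integral_complex_ofReal]
  simp only [h]
  rw [integral_finsetSum _ fun k _ => integrable_finsetSum _ fun i _ =>
    SchwartzMap.integrable_mul _ _]
  exact Finset.sum_congr rfl fun k _ =>
    integral_finsetSum _ fun i _ => SchwartzMap.integrable_mul _ _

/-- Bound of the vortex-stretching integral after splitting at frequency `2^N`. -/
theorem IsLPCutoff.exists_abs_vortexStretch_le_split {χ : E3 → ℝ} (hχ : IsLPCutoff χ) {α : ℝ}
    (hα : 0 < α) (hα1 : α < 1) :
    ∃ K : ℝ, 0 < K ∧ ∀ u : Fin 3 → 𝓢(E3, ℝ), (∀ x, ∑ i : Fin 3, pd i (⇑(u i)) x = 0) →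
      ∀ b : ℝ, 0 ≤ b →
      (∀ (k : Fin 3) (j : ℤ) (x : E3),
        ‖blockCLM χ j (vorticityS u k).complexify x‖ ≤ b * (2 : ℝ) ^ (j * α)) →
      ∀ (N : ℤ) (ε : ℝ), 0 < ε →
        |vortexStretch u| ≤ K * b * ((2 : ℝ) ^ (N * α) * (∑ k, ∫ x, vorticityS u k x ^ 2) +
          (2 : ℝ) ^ (-(N * (1 - α))) *
            (ε * (∑ n : Fin 3, ∑ k : Fin 3,
              ∫ x, (∂_{EuclideanSpace.single n (1 : ℝ)} (vorticityS u k) : 𝓢(E3, ℝ)) x ^ 2) +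
              ε⁻¹ * ∑ k, ∫ x, vorticityS u k x ^ 2)) := by
  obtain ⟨K₀, hK₀, hK⟩ := hχ.exists_block_bound
  have hq (s : ℝ) (hs : 0 < s) : 0 < (1 - (2 : ℝ) ^ (-s))⁻¹ :=
    inv_pos.mpr (sub_pos.mpr (Real.rpow_lt_one_of_one_lt_of_neg (by norm_num) (by linarith)))
  set c₁ := (1 - (2 : ℝ) ^ (-α))⁻¹
  set c₂ := (1 - (2 : ℝ) ^ (-(1 - α)))⁻¹
  have hc₁ : 0 < c₁ := hq α hα
  have hc₂ : 0 < c₂ := hq (1 - α) (by linarith)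
  refine ⟨18 * (K₀ + 1) * (c₁ + c₂), by positivity, fun u hu b hb hblock N ε hε => ?_⟩
  set X : Fin 3 → ℝ := fun k => ∫ x, vorticityS u k x ^ 2
  set Y : Fin 3 → Fin 3 → ℝ := fun n k =>
    ∫ x, (∂_{EuclideanSpace.single n (1 : ℝ)} (vorticityS u k) : 𝓢(E3, ℝ)) x ^ 2
  have hX (k) : 0 ≤ X k := integral_nonneg fun _ => sq_nonneg _
  have hY (n k) : 0 ≤ Y n k := integral_nonneg fun _ => sq_nonneg _
  set p := (2 : ℝ) ^ (N * α)
  set q := (2 : ℝ) ^ (-(N * (1 - α)))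
  have hp : 0 < p := by positivity
  have hq0 : 0 < q := by positivity
  have hterm (k i : Fin 3) :
      ‖∫ x, (∂_{EuclideanSpace.single i (1 : ℝ)} (u k) : 𝓢(E3, ℝ)).complexify x *
        (realMul (vorticityS u i) (vorticityS u k)).complexify x‖ ≤
      K₀ * b * (p * c₁ * (X i + X k) +
        q * c₂ * ∑ n, (ε * (Y n i + Y n k) + ε⁻¹ * (X i + X k))) := by
    have hB (j : ℤ) := hK _ _ _ i (k + 2) (k + 1) (normSq_mul_fourier_lineDeriv u hu i k) j
      (b * (2 : ℝ) ^ (j * α)) (hblock (k + 1) j) (hblock (k + 2) j)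
    refine (hχ.norm_integral_mul_le hα hα1 _ _ (mul_nonneg hK₀ hb)
      (fun j x => ?_) (fun j => ?_) N).trans ?_
    · rw [mul_assoc]
      exact (hB j).1 x
    · obtain ⟨G, hG, hGb⟩ := (hB j).2
      refine ⟨G, hG, fun n x => (hGb n x).trans_eq ?_⟩
      ring
    · gcongr
      · exact integral_norm_complexify_realMul_le _ _
      · exact integral_norm_lineDeriv_complexify_realMul_le _ _ _ hε
  calc |vortexStretch u| = ‖(vortexStretch u : ℂ)‖ := by rw [Complex.norm_real, Real.norm_eq_abs]
    _ ≤ ∑ k, ∑ i, K₀ * b * (p * c₁ * (X i + X k) +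
        q * c₂ * ∑ n, (ε * (Y n i + Y n k) + ε⁻¹ * (X i + X k))) := by
        rw [vortexStretch_eq_sum]
        exact norm_sum_le_of_le _ fun k _ => norm_sum_le_of_le _ fun i _ => hterm k i
    _ = K₀ * b * (p * (6 * c₁) * (∑ k, X k) +
        q * (ε * (6 * c₂) * (∑ n, ∑ k, Y n k) + ε⁻¹ * (18 * c₂) * ∑ k, X k)) := by
        simp only [Fin.sum_univ_three]
        ring
    _ ≤ (K₀ + 1) * b * (p * (18 * (c₁ + c₂)) * (∑ k, X k) +
        q * (ε * (18 * (c₁ + c₂)) * (∑ n, ∑ k, Y n k) + ε⁻¹ * (18 * (c₁ + c₂)) * ∑ k, X k)) := by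
        have h1 : 0 ≤ ∑ k, X k := Finset.sum_nonneg fun k _ => hX k
        have h2 : 0 ≤ ∑ n, ∑ k, Y n k :=
          Finset.sum_nonneg fun n _ => Finset.sum_nonneg fun k _ => hY n k
        gcongr <;> linarith
    _ = _ := by ring

/-- Optimization over the splitting frequency and the Young parameter. -/
theorem le_of_forall_split_le {α K b V X Y : ℝ} (hα : 0 < α) (hα1 : α < 1) (hK : 0 < K)
    (hb : 0 ≤ b) (hX : 0 ≤ X) (hY : 0 ≤ Y)
    (h : ∀ (N : ℤ) (ε : ℝ), 0 < ε →
      V ≤ K * b * ((2 : ℝ) ^ (N * α) * X +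
        (2 : ℝ) ^ (-(N * (1 - α))) * (ε * Y + ε⁻¹ * X))) :
    V ≤ 1 / 2 * Y + (K + 8 * K ^ 2) * X * b ^ (2 / (2 - α)) := by
  rcases hb.eq_or_lt with rfl | hb
  · have := h 0 1 one_pos
    rw [mul_zero, zero_mul] at this
    exact this.trans (by positivity)
  set t := b ^ (1 / (2 - α))
  have ht : 0 < t := by positivity
  have hα2 : 0 < 2 - α := by linarith
  have htb : b = t ^ (2 - α) := by
    rw [← Real.rpow_mul hb.le, one_div_mul_cancel hα2.ne', Real.rpow_one]
  have ht2 : b ^ (2 / (2 - α)) = t ^ 2 := by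
    rw [← Real.rpow_natCast, ← Real.rpow_mul hb.le]
    congr 1
    push_cast
    ring
  obtain ⟨N, hN, hN'⟩ := exists_mem_Ico_zpow ht (one_lt_two (α := ℝ))
  have hlow : b * (2 : ℝ) ^ (N * α) ≤ t ^ 2 := by
    calc b * (2 : ℝ) ^ (N * α) = t ^ (2 - α) * ((2 : ℝ) ^ N) ^ α := by
          rw [← htb, Real.rpow_mul (by norm_num), Real.rpow_intCast]
      _ ≤ t ^ (2 - α) * t ^ α := by gcongr
      _ = t ^ 2 := by
          rw [← Real.rpow_add ht, ← Real.rpow_natCast]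
          congr 1
          push_cast
          ring
  have hhigh : b * (2 : ℝ) ^ (-(N * (1 - α))) ≤ 2 * t := by
    have h1 : (t / 2) ^ (1 - α) ≤ (2 : ℝ) ^ (N * (1 - α)) := by
      rw [Real.rpow_mul (by norm_num), Real.rpow_intCast]
      refine Real.rpow_le_rpow (by positivity) ?_ (by linarith)
      rw [zpow_add₀ (by norm_num), zpow_one] at hN'
      linarith
    have h2 : b ≤ 2 * t * (t / 2) ^ (1 - α) := by
      have h3 : b = t * t ^ (1 - α) := by
        rw [htb]
        nth_rewrite 2 [← Real.rpow_one t]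
        rw [← Real.rpow_add ht]
        congr 1
        ring
      have h4 : (2 : ℝ) ^ (1 - α) ≤ 2 := by
        simpa using Real.rpow_le_rpow_of_exponent_le (one_le_two (α := ℝ))
          (show 1 - α ≤ 1 by linarith)
      rw [Real.div_rpow ht.le (by norm_num), h3, mul_div_assoc', le_div_iff₀ (by positivity)]
      have : 0 < t * t ^ (1 - α) := by positivity
      nlinarith
    rw [Real.rpow_neg (by norm_num), ← div_eq_mul_inv, div_le_iff₀ (by positivity)]
    exact h2.trans (by gcongr)
  set p := (2 : ℝ) ^ (N * α)
  set q := (2 : ℝ) ^ (-(N * (1 - α)))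
  have hq : 0 < q := by positivity
  set s := K * (b * q) with hs
  have hs0 : 0 < s := by positivity
  have hs1 : s ≤ K * (2 * t) := mul_le_mul_of_nonneg_left hhigh hK.le
  calc V ≤ K * b * (p * X + q * ((2 * s)⁻¹ * Y + (2 * s)⁻¹⁻¹ * X)) := h N _ (by positivity)
    _ = K * (b * p) * X + s * ((2 * s)⁻¹ * Y + 2 * s * X) := by rw [inv_inv, hs]; ring
    _ = 1 / 2 * Y + (K * (b * p) + 2 * s ^ 2) * X := by field_simp; ring
    _ ≤ 1 / 2 * Y + (K * t ^ 2 + 2 * (K * (2 * t)) ^ 2) * X := by gcongr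
    _ = _ := by rw [ht2]; ring

theorem vecL2_curlS_rpow_two (u : Fin 3 → 𝓢(E3, ℝ)) :
    vecL2 (curlS u) ^ (2 : ℝ) = ENNReal.ofReal (∑ k, ∫ x, vorticityS u k x ^ 2) := by
  rw [vecL2, ← ENNReal.rpow_mul, ENNReal.ofReal_sum_of_nonneg fun k _ =>
    integral_nonneg fun _ => sq_nonneg _]
  norm_num
  refine Finset.sum_congr rfl fun k _ => ?_
  rw [← coe_vorticityS]
  simpa using (vorticityS u k).eLpNorm_two_rpow_two

theorem gradL2_curlS_rpow_two (u : Fin 3 → 𝓢(E3, ℝ)) :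
    gradL2 (curlS u) ^ (2 : ℝ) = ENNReal.ofReal (∑ n : Fin 3, ∑ k : Fin 3,
      ∫ x, (∂_{EuclideanSpace.single n (1 : ℝ)} (vorticityS u k) : 𝓢(E3, ℝ)) x ^ 2) := by
  rw [gradL2, ← ENNReal.rpow_mul, ENNReal.ofReal_sum_of_nonneg fun n _ =>
    Finset.sum_nonneg fun k _ => integral_nonneg fun _ => sq_nonneg _]
  norm_num
  refine Finset.sum_congr rfl fun n _ => ?_
  rw [ENNReal.ofReal_sum_of_nonneg fun k _ => integral_nonneg fun _ => sq_nonneg _]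
  refine Finset.sum_congr rfl fun k _ => ?_
  rw [← coe_vorticityS, pd_coe]
  simpa using
    (∂_{EuclideanSpace.single n (1 : ℝ)} (vorticityS u k) : 𝓢(E3, ℝ)).eLpNorm_two_rpow_two

theorem SchwartzMap.norm_le_of_eLpNorm_top_le (f : 𝓢(E3, ℂ)) {c : ℝ} (hc : 0 ≤ c)
    (h : eLpNorm f ⊤ volume ≤ ENNReal.ofReal c) (x : E3) : ‖f x‖ ≤ c := by
  have hae : ∀ᵐ y, ‖f y‖ ≤ c := by
    rw [eLpNorm_exponent_top] at h
    filter_upwards [enorm_ae_le_eLpNormEssSup f volume] with y hy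
    have := hy.trans h
    rwa [← ofReal_norm, ENNReal.ofReal_le_ofReal_iff hc] at this
  have hcl : IsClosed {y | ‖f y‖ ≤ c} := isClosed_le f.continuous.norm continuous_const
  have hd : Dense {y | ‖f y‖ ≤ c} := Measure.dense_of_ae hae
  have : x ∈ closure {y | ‖f y‖ ≤ c} := hd x
  rwa [hcl.closure_eq] at this

theorem IsLPCutoff.norm_blockCLM_le_of_vecBesovInf {χ : E3 → ℝ} (hχ : IsLPCutoff χ) {α : ℝ}
    (u : Fin 3 → 𝓢(E3, ℝ)) (hB : vecBesovInf χ (-α) (curlS u) ≠ ∞) (k : Fin 3) (j : ℤ) (x : E3) :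
    ‖blockCLM χ j (vorticityS u k).complexify x‖ ≤
      (vecBesovInf χ (-α) (curlS u)).toReal * (2 : ℝ) ^ (j * α) := by
  refine SchwartzMap.norm_le_of_eLpNorm_top_le _ (by positivity) ?_ x
  rw [hχ.coe_blockCLM, ENNReal.ofReal_mul ENNReal.toReal_nonneg, ENNReal.ofReal_toReal hB,
    ← ENNReal.ofReal_rpow_of_pos (by norm_num), ENNReal.ofReal_ofNat]
  have h : (2 : ℝ≥0∞) ^ ((j : ℝ) * -α) *
      eLpNorm (Dproj χ j (vorticityS u k).complexify) ⊤ volume ≤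
        vecBesovInf χ (-α) (curlS u) := by
    have hcoe : ⇑(vorticityS u k).complexify = fun x => ((curlS u k x : ℝ) : ℂ) := by
      rw [← coe_vorticityS]
      rfl
    rw [hcoe]
    exact le_iSup₂_of_le (f := fun (i : Fin 3) (j : ℤ) => (2 : ℝ≥0∞) ^ ((j : ℝ) * -α) *
      eLpNorm (Dproj χ j fun x => ((curlS u i x : ℝ) : ℂ)) ⊤ volume) k j le_rfl
  have h2 : (2 : ℝ≥0∞) ^ ((j : ℝ) * -α) * (2 : ℝ≥0∞) ^ ((j : ℝ) * α) = 1 := by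
    rw [← ENNReal.rpow_add _ _ (by norm_num) (by norm_num)]
    simp
  calc _ = (2 : ℝ≥0∞) ^ ((j : ℝ) * -α) *
        eLpNorm (Dproj χ j (vorticityS u k).complexify) ⊤ volume * (2 : ℝ≥0∞) ^ ((j : ℝ) * α) := by
        rw [mul_right_comm, h2, one_mul]
    _ ≤ _ := by gcongr

theorem vortexStretch_eq_zero_of_vecL2_eq_zero (u : Fin 3 → 𝓢(E3, ℝ))
    (h : vecL2 (curlS u) = 0) : vortexStretch u = 0 := by
  have hae (k : Fin 3) : curlS u k =ᵐ[volume] 0 := by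
    simp only [vecL2, ENNReal.rpow_eq_zero_iff, Finset.sum_eq_zero_iff] at h
    have hk : eLpNorm (curlS u k) 2 volume = 0 := by
      rcases h with h | h
      · simpa [not_lt.mpr (zero_le_two (α := ℝ))] using h.1 k
      · norm_num at h
    rw [← coe_vorticityS] at hk ⊢
    exact (eLpNorm_eq_zero_iff (vorticityS u k).continuous.aestronglyMeasurable
      (by norm_num)).mp hk
  refine integral_eq_zero_of_ae ?_
  filter_upwards [hae 0, hae 1, hae 2] with x h0 h1 h2
  simp [Fin.sum_univ_three, h0, h1, h2]

/-- **Estimate (3.11)**: for `0 < α < 1` there is a constant `C > 0` such that for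
every divergence-free Schwartz vector field `u` on `ℝ³` with vorticity `ω = curl u`,
`|∫ ((ω·∇)u)·ω dx| ≤ (1/2) ‖∇ω‖_{L²}² + C ‖ω‖_{L²}²
(‖ω‖_{Ḃ^{-1-α}_{∞,∞}}^{2/(1-α)} + ‖ω‖_{Ḃ^{-α}_{∞,∞}}^{2/(2-α)})`. -/
theorem vortex_stretch_young_estimate
    (χ : E3 → ℝ) (hχ : IsLPCutoff χ) (α : ℝ) (hα : 0 < α) (hα1 : α < 1) :
    ∃ C : ℝ≥0∞, 0 < C ∧ C < ∞ ∧
      ∀ u : Fin 3 → 𝓢(E3, ℝ), (∀ x, ∑ i : Fin 3, pd i (⇑(u i)) x = 0) →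
        ENNReal.ofReal |vortexStretch u| ≤
          (1 / 2 : ℝ≥0∞) * gradL2 (curlS u) ^ (2 : ℝ)
            + C * vecL2 (curlS u) ^ (2 : ℝ) *
              (vecBesovInf χ (-1 - α) (curlS u) ^ (2 / (1 - α))
                + vecBesovInf χ (-α) (curlS u) ^ (2 / (2 - α))) := by
  obtain ⟨K, hK, hsplit⟩ := hχ.exists_abs_vortexStretch_le_split hα hα1
  have hC : 0 < K + 8 * K ^ 2 := by positivity
  have hexp : 0 < 2 / (2 - α) := div_pos two_pos (by linarith)
  refine ⟨ENNReal.ofReal (K + 8 * K ^ 2), ENNReal.ofReal_pos.mpr hC, ENNReal.ofReal_lt_top,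
    fun u hu => ?_⟩
  refine le_trans ?_ (add_le_add_right (mul_le_mul_right le_add_self _) _)
  by_cases hB : vecBesovInf χ (-α) (curlS u) = ∞
  · by_cases h0 : vecL2 (curlS u) = 0
    · simp [vortexStretch_eq_zero_of_vecL2_eq_zero u h0]
    · rw [hB, ENNReal.top_rpow_of_pos hexp, ENNReal.mul_top, add_top]
      · exact le_top
      · refine mul_ne_zero (ENNReal.ofReal_pos.mpr hC).ne' ?_
        simpa [ENNReal.rpow_eq_zero_iff] using h0
  · have hX : 0 ≤ ∑ k, ∫ x, vorticityS u k x ^ 2 :=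
      Finset.sum_nonneg fun k _ => integral_nonneg fun _ => sq_nonneg _
    have hY : 0 ≤ ∑ n : Fin 3, ∑ k : Fin 3,
        ∫ x, (∂_{EuclideanSpace.single n (1 : ℝ)} (vorticityS u k) : 𝓢(E3, ℝ)) x ^ 2 :=
      Finset.sum_nonneg fun n _ => Finset.sum_nonneg fun k _ =>
        integral_nonneg fun _ => sq_nonneg _
    have h := le_of_forall_split_le hα hα1 hK ENNReal.toReal_nonneg hX hY
      (hsplit u hu _ ENNReal.toReal_nonneg (hχ.norm_blockCLM_le_of_vecBesovInf u hB))
    refine (ENNReal.ofReal_le_ofReal h).trans_eq ?_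
    rw [ENNReal.ofReal_add (by positivity) (by positivity), ENNReal.ofReal_mul (by norm_num),
      ENNReal.ofReal_mul (by positivity), ENNReal.ofReal_mul hC.le, vecL2_curlS_rpow_two,
      gradL2_curlS_rpow_two, ← ENNReal.ofReal_rpow_of_nonneg ENNReal.toReal_nonneg hexp.le,
      ENNReal.ofReal_toReal hB, ENNReal.ofReal_div_of_pos two_pos]
    simp
end
end
end

section
/- Let (u, p) be a strong solution of the Navier–Stokes equations on [0,T) × ℝ³ (smooth, divergence-free, with u(t,·) and p(t,·) Schwartz in x, locally uniformly in t). Then the energy identity holds: for every t ∈ [0,T), ‖u(t,·)‖_{L²}² + 2 ∫₀ᵗ ‖∇u(τ,·)‖_{L²}² dτ = ‖u(0,·)‖_{L²}². -/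
open MeasureTheory Real Complex Filter Function
open scoped ENNReal FourierTransform SchwartzMap

noncomputable section

noncomputable section

/-- A **strong solution of the Navier–Stokes equations** on `[0,T) × ℝ³`: the velocity
`u` and the pressure `p` are smooth on `[0,T) × ℝ³` and Schwartz in the space variable
with all Schwartz seminorms locally bounded in time, `u(t,·)` is divergence-free, and
`∂ₜu - Δu + (u·∇)u + ∇p = 0` on `(0,T) × ℝ³`. -/
structure IsStrongSolution (T : ℝ) (u : ℝ → Fin 3 → 𝓢(E3, ℝ)) (p : ℝ → 𝓢(E3, ℝ)) :
    Prop where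
  smooth_u : ∀ i : Fin 3, ContDiffOn ℝ ((⊤ : ℕ∞) : WithTop ℕ∞)
    (fun tx : ℝ × E3 => u tx.1 i tx.2) (Set.Ico 0 T ×ˢ Set.univ)
  smooth_p : ContDiffOn ℝ ((⊤ : ℕ∞) : WithTop ℕ∞)
    (fun tx : ℝ × E3 => p tx.1 tx.2) (Set.Ico 0 T ×ˢ Set.univ)
  locBdd_u : ∀ k l : ℕ, ∀ t ∈ Set.Ico (0 : ℝ) T, ∃ ε > 0, ∃ M : ℝ,
    ∀ s ∈ Set.Ico (0 : ℝ) T, |s - t| < ε → ∀ i, SchwartzMap.seminorm ℝ k l (u s i) ≤ M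
  locBdd_p : ∀ k l : ℕ, ∀ t ∈ Set.Ico (0 : ℝ) T, ∃ ε > 0, ∃ M : ℝ,
    ∀ s ∈ Set.Ico (0 : ℝ) T, |s - t| < ε → SchwartzMap.seminorm ℝ k l (p s) ≤ M
  divFree : ∀ t ∈ Set.Ico (0 : ℝ) T, ∀ x, ∑ i : Fin 3, pd i (⇑(u t i)) x = 0
  eqn : ∀ t ∈ Set.Ioo (0 : ℝ) T, ∀ x, ∀ j : Fin 3,
    deriv (fun s => u s j x) t - (∑ i : Fin 3, pd i (pd i (⇑(u t j))) x)
      + (∑ i : Fin 3, u t i x * pd i (⇑(u t j)) x) + pd j (⇑(p t)) x = 0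

/-- The space-time integral `∫₀ᵀ (‖ω(τ)‖_{Ḃ^{-α}_{∞,∞}}^{2/(2-α)} +
‖ω(τ)‖_{Ḃ^{-1-α}_{∞,∞}}^{2/(1-α)}) dτ` of the vorticity `ω = curl u`. -/
def vortBesovIntegral (χ : E3 → ℝ) (α T : ℝ) (u : ℝ → Fin 3 → 𝓢(E3, ℝ)) : ℝ≥0∞ :=
  ∫⁻ τ in Set.Ioo (0 : ℝ) T,
    vecBesovInf χ (-α) (curlS (u τ)) ^ (2 / (2 - α))
      + vecBesovInf χ (-1 - α) (curlS (u τ)) ^ (2 / (1 - α))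

/-- A strictly positive integrable weight on `ℝ³`, bounded by one. -/
def decayWeight (x : E3) : ℝ := (1 + ‖x‖) ^ (-4 : ℝ)

lemma decayWeight_nonneg (x : E3) : 0 ≤ decayWeight x := by
  unfold decayWeight; positivity

lemma decayWeight_le_one (x : E3) : decayWeight x ≤ 1 :=
  Real.rpow_le_one_of_one_le_of_nonpos (by linarith [norm_nonneg x]) (by norm_num)

lemma integrable_decayWeight : Integrable decayWeight :=
  integrable_one_add_norm (by simp; norm_num)

lemma sq_le_of_abs_le_decayWeight {a C : ℝ} {x : E3} (h : |a| ≤ C * decayWeight x) :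
    a ^ 2 ≤ C ^ 2 * decayWeight x := by
  have h₁ := decayWeight_le_one x
  have h₀ := decayWeight_nonneg x
  calc a ^ 2 = |a| ^ 2 := (sq_abs a).symm
    _ ≤ (C * decayWeight x) ^ 2 := by gcongr
    _ ≤ C ^ 2 * decayWeight x := by
      rw [mul_pow]
      gcongr
      nlinarith

/-- Bounds on the Schwartz seminorms of weight `0` and `4` give pointwise decay. -/
lemma norm_iteratedFDeriv_le_decayWeight (f : 𝓢(E3, ℝ)) (l : ℕ) {M₀ M₄ : ℝ}
    (h₀ : SchwartzMap.seminorm ℝ 0 l f ≤ M₀) (h₄ : SchwartzMap.seminorm ℝ 4 l f ≤ M₄) (x : E3) :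
    ‖iteratedFDeriv ℝ l f x‖ ≤ 8 * (M₀ + M₄) * decayWeight x := by
  have a₀ := (SchwartzMap.le_seminorm ℝ 0 l f x).trans h₀
  have a₄ := (SchwartzMap.le_seminorm ℝ 4 l f x).trans h₄
  have hx := norm_nonneg x
  have hw : decayWeight x = ((1 + ‖x‖) ^ 4)⁻¹ := by
    rw [decayWeight, Real.rpow_neg (by positivity)]
    norm_cast
  rw [hw, ← div_eq_mul_inv, le_div_iff₀ (by positivity)]
  have hp : (1 + ‖x‖) ^ 4 ≤ 8 * (1 + ‖x‖ ^ 4) := by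
    nlinarith [sq_nonneg (‖x‖ - 1), sq_nonneg (‖x‖ ^ 2 - 1), sq_nonneg (‖x‖ * (‖x‖ - 1))]
  calc ‖iteratedFDeriv ℝ l f x‖ * (1 + ‖x‖) ^ 4
      ≤ ‖iteratedFDeriv ℝ l f x‖ * (8 * (1 + ‖x‖ ^ 4)) := by gcongr
    _ ≤ 8 * (M₀ + M₄) := by linarith

/-- A family of Schwartz functions with locally bounded seminorms decays locally uniformly. -/
lemma eventually_norm_iteratedFDeriv_le {ι : Type*} {S : Set ℝ} {f : ℝ → ι → 𝓢(E3, ℝ)}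
    (h : ∀ k l : ℕ, ∀ t ∈ S, ∃ ε > 0, ∃ M : ℝ,
      ∀ s ∈ S, |s - t| < ε → ∀ i, SchwartzMap.seminorm ℝ k l (f s i) ≤ M)
    (l : ℕ) {t : ℝ} (ht : t ∈ S) :
    ∃ C, 0 ≤ C ∧ ∀ᶠ s in nhdsWithin t S, ∀ i x,
      ‖iteratedFDeriv ℝ l (f s i) x‖ ≤ C * decayWeight x := by
  have key : ∀ k, ∃ M : ℝ, ∀ᶠ s in nhdsWithin t S, ∀ i,
      SchwartzMap.seminorm ℝ k l (f s i) ≤ M := fun k => by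
    obtain ⟨ε, hε, M, hM⟩ := h k l t ht
    refine ⟨M, ?_⟩
    filter_upwards [self_mem_nhdsWithin, mem_nhdsWithin_of_mem_nhds (Metric.ball_mem_nhds t hε)]
      with s hs hst using hM s hs hst
  obtain ⟨M₀, h₀⟩ := key 0
  obtain ⟨M₄, h₄⟩ := key 4
  refine ⟨|8 * (M₀ + M₄)|, abs_nonneg _, ?_⟩
  filter_upwards [h₀, h₄] with s hs₀ hs₄ i x
  exact (norm_iteratedFDeriv_le_decayWeight (f s i) l (hs₀ i) (hs₄ i) x).trans
    (mul_le_mul_of_nonneg_right (le_abs_self _) (decayWeight_nonneg x))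

/-- The partial derivative as an operation on Schwartz functions. -/
def schwartzPd (i : Fin 3) (f : 𝓢(E3, ℝ)) : 𝓢(E3, ℝ) :=
  LineDeriv.lineDerivOp (EuclideanSpace.single i (1 : ℝ) : E3) f

lemma coe_schwartzPd (i : Fin 3) (f : 𝓢(E3, ℝ)) : ⇑(schwartzPd i f) = pd i f := rfl

lemma abs_pd_le (i : Fin 3) (f : 𝓢(E3, ℝ)) (x : E3) :
    |pd i f x| ≤ ‖iteratedFDeriv ℝ 1 f x‖ := by
  rw [norm_iteratedFDeriv_one]
  simpa [pd] using (fderiv ℝ f x).le_opNorm (EuclideanSpace.single i 1)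

lemma abs_pd_pd_le (i : Fin 3) (f : 𝓢(E3, ℝ)) (x : E3) :
    |pd i (pd i f) x| ≤ ‖iteratedFDeriv ℝ 2 f x‖ := by
  have h : pd i (pd i f) x
      = iteratedFDeriv ℝ 2 f x ![EuclideanSpace.single i 1, EuclideanSpace.single i 1] := by
    rw [iteratedFDeriv_two_apply]
    simp only [pd, Matrix.cons_val_zero, Matrix.cons_val_one]
    have hd : DifferentiableAt ℝ (fderiv ℝ f) x :=
      (SchwartzMap.fderivCLM ℝ E3 ℝ f).differentiableAt
    have hpd : pd i f = fun y => fderiv ℝ f y (EuclideanSpace.single i 1) := rfl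
    rw [hpd, fderiv_clm_apply hd (differentiableAt_const _)]
    simp
  rw [h]
  simpa [Fin.prod_univ_two] using (iteratedFDeriv ℝ 2 f x).le_opNorm
    ![EuclideanSpace.single i 1, EuclideanSpace.single i 1]

/-- The pointwise product of two Schwartz functions. -/
def schwartzMul (f g : 𝓢(E3, ℝ)) : 𝓢(E3, ℝ) :=
  SchwartzMap.pairing (ContinuousLinearMap.mul ℝ ℝ) f g

lemma schwartzMul_apply (f g : 𝓢(E3, ℝ)) (x : E3) : schwartzMul f g x = f x * g x := rfl

lemma pd_schwartzMul (i : Fin 3) (f g : 𝓢(E3, ℝ)) (x : E3) :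
    pd i (schwartzMul f g) x = pd i f x * g x + f x * pd i g x := by
  have h : ⇑(schwartzMul f g) = ⇑f * ⇑g := rfl
  simp only [pd, h, fderiv_mul f.differentiableAt g.differentiableAt]
  simp
  ring

lemma integral_pd_eq_zero (i : Fin 3) (f : 𝓢(E3, ℝ)) : ∫ x, pd i f x = 0 := by
  have := integral_mul_fderiv_eq_neg_fderiv_mul_of_integrable (μ := (volume : Measure E3))
    (f := fun _ => (1 : ℝ)) (g := f) (v := EuclideanSpace.single i 1) (by simp)
    (by simpa only [one_mul] using! (schwartzPd i f).integrable) (by simpa using f.integrable)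
    (fun _ _ => differentiableAt_const _) (fun _ _ => f.differentiableAt)
  simpa [pd] using this

/-- The energy production of a divergence-free Schwartz field: transport and pressure
contribute nothing and diffusion contributes `-2‖∇v‖²`. -/
lemma integral_energy_production (v : Fin 3 → 𝓢(E3, ℝ)) (q : 𝓢(E3, ℝ))
    (hdiv : ∀ x, ∑ i : Fin 3, pd i (v i) x = 0) :
    ∫ x, ∑ j : Fin 3, 2 * v j x * ((∑ i : Fin 3, pd i (pd i (v j)) x)
        - (∑ i : Fin 3, v i x * pd i (v j) x) - pd j q x)
      = -2 * ∫ x, ∑ i : Fin 3, ∑ j : Fin 3, pd i (v j) x ^ 2 := by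
  let D : 𝓢(E3, ℝ) := ∑ i, ∑ j, schwartzMul (schwartzPd i (v j)) (schwartzPd i (v j))
  have hD : ∀ x, D x = ∑ i : Fin 3, ∑ j : Fin 3, pd i (v j) x ^ 2 := fun x => by
    simp [D, schwartzMul_apply, coe_schwartzPd, sq]
  let a (i j : Fin 3) := schwartzMul (v j) (schwartzPd i (v j))
  let b (i j : Fin 3) := schwartzMul (v i) (schwartzMul (v j) (v j))
  let c (i : Fin 3) := schwartzMul q (v i)
  have hpt : ∀ x, ∑ j : Fin 3, 2 * v j x * ((∑ i : Fin 3, pd i (pd i (v j)) x)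
        - (∑ i : Fin 3, v i x * pd i (v j) x) - pd j q x)
      = (∑ i : Fin 3, ((∑ j : Fin 3, (2 * pd i (a i j) x - pd i (b i j) x)) - 2 * pd i (c i) x))
        - 2 * D x := fun x => by
    have h := hdiv x
    simp only [hD, a, b, c, pd_schwartzMul, coe_schwartzPd, schwartzMul_apply,
      Fin.sum_univ_three] at h ⊢
    linear_combination ((v 0 x) ^ 2 + (v 1 x) ^ 2 + (v 2 x) ^ 2 + 2 * q x) * h
  have hI : ∀ i (f : 𝓢(E3, ℝ)), Integrable (pd i f) := fun i f => (schwartzPd i f).integrable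
  have hab : ∀ i j, Integrable (fun x => 2 * pd i (a i j) x - pd i (b i j) x) := fun i j =>
    ((hI i _).const_mul 2).sub (hI i _)
  have habc : ∀ i, Integrable (fun x =>
      (∑ j : Fin 3, (2 * pd i (a i j) x - pd i (b i j) x)) - 2 * pd i (c i) x) := fun i =>
    (integrable_finsetSum _ fun j _ => hab i j).sub ((hI i _).const_mul 2)
  have hzero : ∀ i, ∫ x, ((∑ j : Fin 3, (2 * pd i (a i j) x - pd i (b i j) x))
      - 2 * pd i (c i) x) = 0 := fun i => by
    rw [integral_sub (integrable_finsetSum _ fun j _ => hab i j) ((hI i _).const_mul 2),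
      integral_finsetSum _ fun j _ => hab i j, integral_const_mul, integral_pd_eq_zero]
    simp only [integral_sub ((hI i _).const_mul 2) (hI i _), integral_const_mul,
      integral_pd_eq_zero]
    simp
  simp_rw [hpt]
  rw [integral_sub (integrable_finsetSum _ fun i _ => habc i) (D.integrable.const_mul 2),
    integral_finsetSum _ fun i _ => habc i, integral_const_mul]
  simp only [hzero, hD]
  simp

namespace IsStrongSolution

variable {T : ℝ} {u : ℝ → Fin 3 → 𝓢(E3, ℝ)} {p : ℝ → 𝓢(E3, ℝ)}

lemma continuousOn_apply (hsol : IsStrongSolution T u p) (j : Fin 3) (x : E3) :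
    ContinuousOn (fun s => u s j x) (Set.Ico 0 T) :=
  (hsol.smooth_u j).continuousOn.comp (f := fun s : ℝ => (s, x)) (by fun_prop)
    fun _ hs => ⟨hs, trivial⟩

lemma continuousOn_pd (hsol : IsStrongSolution T u p) (i j : Fin 3) (x : E3) :
    ContinuousOn (fun s => pd i (u s j) x) (Set.Ico 0 T) := by
  have hc := (hsol.smooth_u j).continuousOn_fderivWithin
    ((uniqueDiffOn_Ico 0 T).prod uniqueDiffOn_univ) (by simp)
  have hc' : ContinuousOn (fun s : ℝ => fderivWithin ℝ (fun tx : ℝ × E3 => u tx.1 j tx.2)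
      (Set.Ico 0 T ×ˢ Set.univ) (s, x) (0, EuclideanSpace.single i 1)) (Set.Ico 0 T) :=
    (hc.comp (f := fun s : ℝ => (s, x)) (by fun_prop) fun _ hs => ⟨hs, trivial⟩).clm_apply
      continuousOn_const
  refine hc'.congr fun s hs => ?_
  have hd := ((hsol.smooth_u j).differentiableOn (by simp) (s, x) ⟨hs, trivial⟩).hasFDerivWithinAt
  have hcomp := hd.comp (s := Set.univ) x
    (hasFDerivAt_prodMk_right (𝕜 := ℝ) s x).hasFDerivWithinAt (fun y _ => ⟨hs, trivial⟩)
  have hcomp' := (hasFDerivWithinAt_univ.1 hcomp).fderiv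
  have heq : (fun tx : ℝ × E3 => u tx.1 j tx.2) ∘ (fun y => (s, y)) = ⇑(u s j) := rfl
  rw [heq] at hcomp'
  simp [pd, hcomp']

lemma differentiableAt_apply (hsol : IsStrongSolution T u p) (j : Fin 3) (x : E3) {t : ℝ}
    (ht : t ∈ Set.Ioo 0 T) : DifferentiableAt ℝ (fun s => u s j x) t := by
  have h : DifferentiableAt ℝ (fun tx : ℝ × E3 => u tx.1 j tx.2) (t, x) :=
    ((hsol.smooth_u j).differentiableOn (by simp)).differentiableAt
      (prod_mem_nhds (Ico_mem_nhds ht.1 ht.2) univ_mem)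
  exact h.comp (f := fun s : ℝ => (s, x)) t (by fun_prop)

lemma exists_abs_le (hsol : IsStrongSolution T u p) {t : ℝ} (ht : t ∈ Set.Ico 0 T) :
    ∃ C, 0 ≤ C ∧ ∀ᶠ s in nhdsWithin t (Set.Ico 0 T), ∀ j x, |u s j x| ≤ C * decayWeight x := by
  obtain ⟨C, hC, h⟩ := eventually_norm_iteratedFDeriv_le hsol.locBdd_u 0 ht
  exact ⟨C, hC, by simpa using h⟩

lemma exists_abs_pd_le (hsol : IsStrongSolution T u p) {t : ℝ} (ht : t ∈ Set.Ico 0 T) :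
    ∃ C, 0 ≤ C ∧ ∀ᶠ s in nhdsWithin t (Set.Ico 0 T), ∀ i j x,
      |pd i (u s j) x| ≤ C * decayWeight x := by
  obtain ⟨C, hC, h⟩ := eventually_norm_iteratedFDeriv_le hsol.locBdd_u 1 ht
  exact ⟨C, hC, h.mono fun s hs i j x => (abs_pd_le i _ x).trans (hs j x)⟩

lemma exists_abs_pd_pd_le (hsol : IsStrongSolution T u p) {t : ℝ} (ht : t ∈ Set.Ico 0 T) :
    ∃ C, 0 ≤ C ∧ ∀ᶠ s in nhdsWithin t (Set.Ico 0 T), ∀ i j x,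
      |pd i (pd i (u s j)) x| ≤ C * decayWeight x := by
  obtain ⟨C, hC, h⟩ := eventually_norm_iteratedFDeriv_le hsol.locBdd_u 2 ht
  exact ⟨C, hC, h.mono fun s hs i j x => (abs_pd_pd_le i _ x).trans (hs j x)⟩

lemma exists_abs_pd_pressure_le (hsol : IsStrongSolution T u p) {t : ℝ} (ht : t ∈ Set.Ico 0 T) :
    ∃ C, 0 ≤ C ∧ ∀ᶠ s in nhdsWithin t (Set.Ico 0 T), ∀ i x,
      |pd i (p s) x| ≤ C * decayWeight x := by
  obtain ⟨C, hC, h⟩ := eventually_norm_iteratedFDeriv_le (f := fun s (_ : Unit) => p s)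
    (by simpa using hsol.locBdd_p) 1 ht
  exact ⟨C, hC, h.mono fun s hs i x => (abs_pd_le i _ x).trans (hs () x)⟩

lemma continuousOn_energy (hsol : IsStrongSolution T u p) :
    ContinuousOn (fun s => ∫ x, ∑ j : Fin 3, u s j x ^ 2) (Set.Ico 0 T) := fun t ht => by
  obtain ⟨C, -, hb⟩ := hsol.exists_abs_le ht
  refine continuousWithinAt_of_dominated (bound := fun x => ∑ _j : Fin 3, C ^ 2 * decayWeight x)
    (.of_forall fun s => ?_) ?_ ?_ (.of_forall fun x => ?_)
  · exact Continuous.aestronglyMeasurable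
      (continuous_finsetSum _ fun j _ => (u s j).continuous.pow 2)
  · filter_upwards [hb] with s hs
    refine .of_forall fun x => ?_
    rw [Real.norm_of_nonneg (by positivity)]
    exact Finset.sum_le_sum fun j _ => sq_le_of_abs_le_decayWeight (hs j x)
  · exact integrable_finsetSum _ fun _ _ => integrable_decayWeight.const_mul _
  · exact tendsto_finsetSum _ fun j _ => (hsol.continuousOn_apply j x t ht).pow 2

lemma continuousOn_dissipation (hsol : IsStrongSolution T u p) :
    ContinuousOn (fun s => ∫ x, ∑ i : Fin 3, ∑ j : Fin 3, pd i (u s j) x ^ 2)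
      (Set.Ico 0 T) := fun t ht => by
  obtain ⟨C, -, hb⟩ := hsol.exists_abs_pd_le ht
  refine continuousWithinAt_of_dominated
    (bound := fun x => ∑ _i : Fin 3, ∑ _j : Fin 3, C ^ 2 * decayWeight x)
    (.of_forall fun s => ?_) ?_ ?_ (.of_forall fun x => ?_)
  · exact Continuous.aestronglyMeasurable (continuous_finsetSum _ fun i _ =>
      continuous_finsetSum _ fun j _ => (schwartzPd i (u s j)).continuous.pow 2)
  · filter_upwards [hb] with s hs
    refine .of_forall fun x => ?_
    rw [Real.norm_of_nonneg (by positivity)]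
    exact Finset.sum_le_sum fun i _ => Finset.sum_le_sum fun j _ =>
      sq_le_of_abs_le_decayWeight (hs i j x)
  · exact integrable_finsetSum _ fun _ _ => integrable_finsetSum _ fun _ _ =>
      integrable_decayWeight.const_mul _
  · exact tendsto_finsetSum _ fun i _ => tendsto_finsetSum _ fun j _ =>
      (hsol.continuousOn_pd i j x t ht).pow 2

lemma hasDerivAt_apply (hsol : IsStrongSolution T u p) (j : Fin 3) (x : E3) {t : ℝ}
    (ht : t ∈ Set.Ioo 0 T) :
    HasDerivAt (fun s => u s j x) ((∑ i : Fin 3, pd i (pd i (u t j)) x)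
      - (∑ i : Fin 3, u t i x * pd i (u t j) x) - pd j (p t) x) t := by
  refine (hsol.differentiableAt_apply j x ht).hasDerivAt.congr_deriv ?_
  linarith [hsol.eqn t ht x j]

lemma hasDerivAt_energy (hsol : IsStrongSolution T u p) {t : ℝ} (ht : t ∈ Set.Ioo 0 T) :
    HasDerivAt (fun s => ∫ x, ∑ j : Fin 3, u s j x ^ 2)
      (-2 * ∫ x, ∑ i : Fin 3, ∑ j : Fin 3, pd i (u t j) x ^ 2) t := by
  have ht' := Set.Ioo_subset_Ico_self ht
  obtain ⟨C₀, hC₀, h₀⟩ := hsol.exists_abs_le ht'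
  obtain ⟨C₁, hC₁, h₁⟩ := hsol.exists_abs_pd_le ht'
  obtain ⟨C₂, hC₂, h₂⟩ := hsol.exists_abs_pd_pd_le ht'
  obtain ⟨C₃, hC₃, h₃⟩ := hsol.exists_abs_pd_pressure_le ht'
  rw [nhdsWithin_eq_nhds.2 (Ico_mem_nhds ht.1 ht.2)] at h₀ h₁ h₂ h₃
  rw [← integral_energy_production (u t) (p t) (hsol.divFree t ht')]
  let K := (∑ _i : Fin 3, C₂) + (∑ _i : Fin 3, C₀ * C₁) + C₃
  refine (hasDerivAt_integral_of_dominated_loc_of_deriv_le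
    (s := {s | s ∈ Set.Ioo 0 T ∧ (∀ j x, |u s j x| ≤ C₀ * decayWeight x) ∧
      (∀ i j x, |pd i (u s j) x| ≤ C₁ * decayWeight x) ∧
      (∀ i j x, |pd i (pd i (u s j)) x| ≤ C₂ * decayWeight x) ∧
      ∀ i x, |pd i (p s) x| ≤ C₃ * decayWeight x})
    (F' := fun s x => ∑ j : Fin 3, 2 * u s j x * ((∑ i : Fin 3, pd i (pd i (u s j)) x)
        - (∑ i : Fin 3, u s i x * pd i (u s j) x) - pd j (p s) x))
    (bound := fun x => ∑ _j : Fin 3, 2 * (C₀ * decayWeight x) * K)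
    ?_ (.of_forall fun s => ?_) ?_ ?_ (.of_forall fun x s hs => ?_) ?_
    (.of_forall fun x s hs => ?_)).2
  · filter_upwards [Ioo_mem_nhds ht.1 ht.2, h₀, h₁, h₂, h₃] with s a b c d e
      using ⟨a, b, c, d, e⟩
  · exact Continuous.aestronglyMeasurable
      (continuous_finsetSum _ fun j _ => (u s j).continuous.pow 2)
  · refine integrable_finsetSum _ fun j _ => ?_
    simpa only [sq] using! (schwartzMul (u t j) (u t j)).integrable
  · refine Continuous.aestronglyMeasurable (continuous_finsetSum _ fun j _ => ?_)
    exact (continuous_const.mul (u t j).continuous).mul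
      (((continuous_finsetSum _ fun i _ => (schwartzPd i (schwartzPd i (u t j))).continuous).sub
        (continuous_finsetSum _ fun i _ =>
          (u t i).continuous.mul (schwartzPd i (u t j)).continuous)).sub
        (schwartzPd j (p t)).continuous)
  · obtain ⟨-, b₀, b₁, b₂, b₃⟩ := hs
    have hw₀ := decayWeight_nonneg x
    have weaken {C a : ℝ} (hC : 0 ≤ C) (h : |a| ≤ C * decayWeight x) : |a| ≤ C :=
      h.trans (mul_le_of_le_one_right hC (decayWeight_le_one x))
    refine (norm_sum_le _ _).trans (Finset.sum_le_sum fun j _ => ?_)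
    rw [Real.norm_eq_abs, abs_mul, abs_mul, abs_two]
    have hK : |(∑ i : Fin 3, pd i (pd i (u s j)) x) - (∑ i : Fin 3, u s i x * pd i (u s j) x)
        - pd j (p s) x| ≤ K := by
      refine (abs_sub _ _).trans (add_le_add ((abs_sub _ _).trans (add_le_add ?_ ?_))
        (weaken hC₃ (b₃ j x)))
      · exact (Finset.abs_sum_le_sum_abs _ _).trans
          (Finset.sum_le_sum fun i _ => weaken hC₂ (b₂ i j x))
      · refine (Finset.abs_sum_le_sum_abs _ _).trans (Finset.sum_le_sum fun i _ => ?_)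
        rw [abs_mul]
        exact mul_le_mul (weaken hC₀ (b₀ i x)) (weaken hC₁ (b₁ i j x)) (abs_nonneg _) hC₀
    exact mul_le_mul (mul_le_mul_of_nonneg_left (b₀ j x) two_pos.le) hK (abs_nonneg _)
      (by positivity)
  · exact integrable_finsetSum _ fun _ _ =>
      ((integrable_decayWeight.const_mul _).const_mul _).mul_const _
  · refine HasDerivAt.fun_sum fun j _ => ?_
    simpa using (hsol.hasDerivAt_apply j x hs.1).fun_pow 2

end IsStrongSolution

/-- **Energy identity (3.15)**: a strong solution `(u, p)` of the Navier–Stokes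
equations on `[0,T) × ℝ³` satisfies
`‖u(t)‖_{L²}² + 2 ∫₀ᵗ ‖∇u(τ)‖_{L²}² dτ = ‖u(0)‖_{L²}²` for every `t ∈ [0,T)`. -/
theorem navier_stokes_energy_identity
    (T : ℝ) (hT : 0 < T) (u : ℝ → Fin 3 → 𝓢(E3, ℝ)) (p : ℝ → 𝓢(E3, ℝ))
    (hsol : IsStrongSolution T u p) (t : ℝ) (ht : t ∈ Set.Ico (0 : ℝ) T) :
    (∫ x, ∑ j : Fin 3, u t j x ^ 2)
        + 2 * ∫ τ in (0 : ℝ)..t, ∫ x, ∑ i : Fin 3, ∑ j : Fin 3, pd i (⇑(u τ j)) x ^ 2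
      = ∫ x, ∑ j : Fin 3, u 0 j x ^ 2 := by
  have hsub : Set.Icc 0 t ⊆ Set.Ico 0 T := fun s hs => ⟨hs.1, hs.2.trans_lt ht.2⟩
  have hint : IntervalIntegrable
      (fun τ => -2 * ∫ x, ∑ i : Fin 3, ∑ j : Fin 3, pd i (⇑(u τ j)) x ^ 2) volume 0 t :=
    ((hsol.continuousOn_dissipation.mono hsub).intervalIntegrable_of_Icc ht.1).const_mul _
  have hftc := intervalIntegral.integral_eq_sub_of_hasDerivAt_of_le ht.1
    (hsol.continuousOn_energy.mono hsub)
    (fun s hs => hsol.hasDerivAt_energy ⟨hs.1, hs.2.trans ht.2⟩) hint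
  rw [intervalIntegral.integral_const_mul] at hftc
  linarith
end
end
end
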